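/- arXiv:2308.05017 — 9 statements merged into one kernel-verified Lean document; each statement's English description precedes it below -/
import Mathlib

section
/- For every feature map f : X → ℝ^k, the matrix-factorization loss satisfies L_mf(f) = L_nscl(f) + C, where C = Σ_{x,x'∈X} w(x,x')² / (w(x)·w(x')) is a constant not depending on f. In particular, minimizing L_mf over f is equivalent to minimizing the NCD Spectral Contrastive Loss L_nscl over f. -/
/-!
Write `q i` for the law of an augmented view of a labelled sample of class `i`. The edge weights are
a mixture of product laws `q ⊗ q`, with `q` ranging over the `q i` (weight `α`) and over the
rows of `T_u` (weight `β p_u`). Each such `q` has total mass one, so the degree vector is the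
corresponding mixture of the `q` themselves, `d = α ∑ᵢ q i + β (p_u T_u)`. Expanding the square in
the matrix-factorization loss leaves a cross term, linear in the edge weights, which gives the two
attractive terms of the contrastive loss; a quadratic form in `d`, whose binomial expansion gives
the three repulsive terms; and a remainder free of the features. The features enter only through
their Gram matrix, whose symmetry merges the two mixed terms of that expansion.
-/

namespace NSCL

open Matrix

section BilinearForm

variable {S T X Y R : Type*} [Fintype X] [Fintype Y] [CommSemiring R]

lemma dotProduct_mulVec_eq_sum (K : Matrix X Y R) (u : X → R) (v : Y → R) :
    u ⬝ᵥ K *ᵥ v = ∑ x, ∑ y, u x * v y * K x y := by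
  simp only [dotProduct, mulVec, Finset.mul_sum, mul_assoc, mul_comm (K _ _)]

lemma dotProduct_mulVec_self_smul_add_smul {K : Matrix X X R} (hK : K.IsSymm) (a b : R)
    (u v : X → R) :
    (a • u + b • v) ⬝ᵥ K *ᵥ (a • u + b • v) =
      a ^ 2 * (u ⬝ᵥ K *ᵥ u) + 2 * a * b * (u ⬝ᵥ K *ᵥ v) + b ^ 2 * (v ⬝ᵥ K *ᵥ v) := by
  have symm : v ⬝ᵥ K *ᵥ u = u ⬝ᵥ K *ᵥ v := by
    rw [← dotProduct_transpose_mulVec, hK.eq]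
  simp only [mulVec_add, mulVec_smul, add_dotProduct, dotProduct_add, smul_dotProduct,
    dotProduct_smul, smul_eq_mul, symm]
  ring

lemma sum_dotProduct_mulVec_sum [Fintype S] [Fintype T] (K : Matrix X Y R) (u : S → X → R)
    (v : T → Y → R) :
    (∑ s, u s) ⬝ᵥ K *ᵥ (∑ t, v t) = ∑ s, ∑ t, u s ⬝ᵥ K *ᵥ v t := by
  rw [sum_dotProduct]
  simp only [mulVec_sum, dotProduct_sum]

end BilinearForm

section Mixture

variable {S T X Y R : Type*} [Fintype S] [Fintype T] [CommSemiring R]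

/-- The mixture of the family of laws `q` with weights `c`. For a kernel `q`, this is the law of an
augmented view of a sample with law `c`. -/
def mixture (c : S → R) (q : S → X → R) : X → R := ∑ s, c s • q s

/-- The law of a positive pair: `s` is drawn with weight `c s`, then both views are drawn
independently from `q s`. -/
def pairWeight (c : S → R) (q : S → X → R) : Matrix X X R :=
  of fun x x' => ∑ s, c s * q s x * q s x'

lemma mixture_apply (c : S → R) (q : S → X → R) (x : X) :
    mixture c q x = ∑ s, c s * q s x := by
  simp [mixture]

lemma mixture_one (q : S → X → R) : mixture 1 q = ∑ s, q s := by
  simp [mixture]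

lemma mixture_apply_mul_mixture_apply (c : S → R) (q : S → X → R) (c' : T → R) (q' : T → Y → R)
    (x : X) (y : Y) :
    mixture c q x * mixture c' q' y = ∑ s, ∑ t, c s * c' t * q s x * q' t y := by
  simp only [mixture_apply, Finset.sum_mul_sum]
  exact Finset.sum_congr rfl fun s _ => Finset.sum_congr rfl fun t _ => by ring

variable [Fintype X] [Fintype Y]

lemma sum_mixture_eq_one {c : S → R} {q : S → X → R} (hc : ∑ s, c s = 1)
    (hq : ∀ s, ∑ x, q s x = 1) : ∑ x, mixture c q x = 1 := by
  simp only [mixture_apply]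
  rw [Finset.sum_comm]
  simp only [← Finset.mul_sum, hq, mul_one, hc]

lemma mixture_dotProduct_mulVec_mixture (K : Matrix X Y R) (c : S → R) (q : S → X → R)
    (c' : T → R) (q' : T → Y → R) :
    mixture c q ⬝ᵥ K *ᵥ mixture c' q' =
      ∑ s, ∑ t, ∑ x, ∑ y, c s * c' t * q s x * q' t y * K x y := by
  rw [mixture, mixture, sum_dotProduct_mulVec_sum]
  simp only [dotProduct_mulVec_eq_sum, Pi.smul_apply, smul_eq_mul, ← mul_assoc,
    mul_right_comm _ (q _ _) (c' _)]

lemma sum_pairWeight_mul (c : S → R) (q : S → X → R) (K : Matrix X X R) :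
    ∑ x, ∑ x', pairWeight c q x x' * K x x' = ∑ s, c s * (q s ⬝ᵥ K *ᵥ q s) := by
  simp only [pairWeight, of_apply, dotProduct_mulVec_eq_sum, Finset.sum_mul, Finset.mul_sum,
    mul_assoc]
  exact Finset.sum_comm_cycle

end Mixture

section Degree

variable {S X R : Type*} [Fintype S] [Fintype X] [CommSemiring R]

/-- The degree vector `w(x)` of a weighted graph with edge weights `w(x, x')`. -/
def degree (w : Matrix X X R) : X → R := fun x => ∑ x', w x x'

lemma degree_smul_add_smul (a b : R) (w w' : Matrix X X R) :
    degree (a • w + b • w') = a • degree w + b • degree w' := by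
  ext x
  simp [degree, Finset.sum_add_distrib, Finset.mul_sum]

lemma degree_pairWeight (c : S → R) {q : S → X → R} (hq : ∀ s, ∑ x, q s x = 1) :
    degree (pairWeight c q) = mixture c q := by
  ext x
  calc ∑ x', ∑ s, c s * q s x * q s x'
      = ∑ s, ∑ x', c s * q s x * q s x' := Finset.sum_comm
    _ = ∑ s, c s * q s x := by simp only [← Finset.mul_sum, hq, mul_one]
    _ = mixture c q x := (mixture_apply c q x).symm

end Degree

section EdgeWeight

variable {Xl Xu X Yl R : Type*} [Fintype Xl] [Fintype Xu] [Fintype Yl] [CommSemiring R]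

/-- The edge weights `w` of the augmentation graph. -/
def edgeWeight (α β : R) (p : Yl → Xl → R) (pu : Xu → R) (Tl : Xl → X → R) (Tu : Xu → X → R) :
    Matrix X X R :=
  of fun x x' => α * ∑ i, ∑ xb, ∑ xb', p i xb * p i xb' * Tl xb x * Tl xb' x'
    + β * ∑ xb, pu xb * Tu xb x * Tu xb x'

lemma edgeWeight_eq_pairWeight_add_pairWeight (α β : R) (p : Yl → Xl → R) (pu : Xu → R)
    (Tl : Xl → X → R) (Tu : Xu → X → R) :
    edgeWeight α β p pu Tl Tu =
      α • pairWeight 1 (fun i => mixture (p i) Tl) + β • pairWeight pu Tu := by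
  ext x x'
  simp [edgeWeight, pairWeight, mixture_apply_mul_mixture_apply]

variable [Fintype X]

lemma degree_edgeWeight (α β : R) {p : Yl → Xl → R} (pu : Xu → R) {Tl : Xl → X → R}
    {Tu : Xu → X → R} (hp : ∀ i, ∑ xb, p i xb = 1) (hTl : ∀ xb, ∑ x, Tl xb x = 1)
    (hTu : ∀ xb, ∑ x, Tu xb x = 1) :
    degree (edgeWeight α β p pu Tl Tu) = α • ∑ i, mixture (p i) Tl + β • mixture pu Tu := by
  rw [edgeWeight_eq_pairWeight_add_pairWeight, degree_smul_add_smul, degree_pairWeight pu hTu,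
    degree_pairWeight 1 fun i => sum_mixture_eq_one (hp i) hTl, mixture_one]

lemma sum_edgeWeight_mul (α β : R) (p : Yl → Xl → R) (pu : Xu → R) (Tl : Xl → X → R)
    (Tu : Xu → X → R) (K : Matrix X X R) :
    ∑ x, ∑ x', edgeWeight α β p pu Tl Tu x x' * K x x' =
      α * ∑ i, mixture (p i) Tl ⬝ᵥ K *ᵥ mixture (p i) Tl
        + β * ∑ xb, pu xb * (Tu xb ⬝ᵥ K *ᵥ Tu xb) := by
  simp only [edgeWeight_eq_pairWeight_add_pairWeight, Matrix.add_apply, Matrix.smul_apply,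
    smul_eq_mul, add_mul, mul_assoc, Finset.sum_add_distrib, ← Finset.mul_sum, sum_pairWeight_mul,
    Pi.one_apply, one_mul]

end EdgeWeight

section Loss

variable {Xl Xu X Yl R : Type*} [Fintype Xl] [Fintype Xu] [Fintype Yl] [Fintype X] [CommRing R]

/-- The NCD spectral contrastive loss `L_nscl`, as a function of the Gram matrix `K` of the
features. -/
def nsclLoss (α β : R) (p : Yl → Xl → R) (pu : Xu → R) (Tl : Xl → X → R) (Tu : Xu → X → R)
    (K : Matrix X X R) : R :=
  - 2 * α * (∑ i, ∑ xb, ∑ xb', ∑ x, ∑ xp, p i xb * p i xb' * Tl xb x * Tl xb' xp * K x xp)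
    - 2 * β * (∑ xb, ∑ x, ∑ xp, pu xb * Tu xb x * Tu xb xp * K x xp)
    + α ^ 2 * (∑ i, ∑ i', ∑ xb, ∑ xb', ∑ x, ∑ xm,
        p i xb * p i' xb' * Tl xb x * Tl xb' xm * K x xm ^ 2)
    + 2 * α * β * (∑ i, ∑ xb, ∑ xbu, ∑ x, ∑ xm,
        p i xb * pu xbu * Tl xb x * Tu xbu xm * K x xm ^ 2)
    + β ^ 2 * (∑ xb, ∑ xb', ∑ x, ∑ xm, pu xb * pu xb' * Tu xb x * Tu xb' xm * K x xm ^ 2)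

lemma nsclLoss_eq_sum_edgeWeight_mul_add_dotProduct (α β : R) {p : Yl → Xl → R} (pu : Xu → R)
    {Tl : Xl → X → R} {Tu : Xu → X → R} (hp : ∀ i, ∑ xb, p i xb = 1)
    (hTl : ∀ xb, ∑ x, Tl xb x = 1) (hTu : ∀ xb, ∑ x, Tu xb x = 1)
    {K : Matrix X X R} (hK : K.IsSymm) :
    nsclLoss α β p pu Tl Tu K =
      -2 * ∑ x, ∑ x', edgeWeight α β p pu Tl Tu x x' * K x x'
        + degree (edgeWeight α β p pu Tl Tu) ⬝ᵥ
            K.map (· ^ 2) *ᵥ degree (edgeWeight α β p pu Tl Tu) := by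
  have unlabelled (xb : Xu) : pu xb * (Tu xb ⬝ᵥ K *ᵥ Tu xb) =
      ∑ x, ∑ xp, pu xb * Tu xb x * Tu xb xp * K x xp := by
    simp only [dotProduct_mulVec_eq_sum, Finset.mul_sum, mul_assoc]
  rw [sum_edgeWeight_mul, degree_edgeWeight α β pu hp hTl hTu,
    dotProduct_mulVec_self_smul_add_smul (hK.map _), sum_dotProduct_mulVec_sum, sum_dotProduct]
  simp only [mixture_dotProduct_mulVec_mixture, unlabelled, map_apply, nsclLoss]
  ring

/-- The matrix-factorization loss `L_mf`, as a function of the edge weights `w` and the Gram matrix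
`K` of the features. -/
noncomputable def mfLoss (w K : Matrix X X ℝ) : ℝ :=
  ∑ x, ∑ x', (w x x' / √(degree w x * degree w x') - √(degree w x * degree w x') * K x x') ^ 2

lemma div_sqrt_sub_sqrt_mul_sq {d : ℝ} (hd : 0 < d) (a b : ℝ) :
    (a / √d - √d * b) ^ 2 = -2 * (a * b) + d * b ^ 2 + a ^ 2 / d := by
  have hsq : √d ^ 2 = d := Real.sq_sqrt hd.le
  have hcancel : a / √d * √d = a := div_mul_cancel₀ a (Real.sqrt_pos.mpr hd).ne'
  calc (a / √d - √d * b) ^ 2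
      = -2 * (a / √d * √d * b) + √d ^ 2 * b ^ 2 + a ^ 2 / √d ^ 2 := by ring
    _ = -2 * (a * b) + d * b ^ 2 + a ^ 2 / d := by rw [hcancel, hsq]

lemma mfLoss_eq_sum_mul_add_dotProduct_add {w : Matrix X X ℝ} (hw : ∀ x, 0 < degree w x)
    (K : Matrix X X ℝ) :
    mfLoss w K =
      -2 * ∑ x, ∑ x', w x x' * K x x' + degree w ⬝ᵥ K.map (· ^ 2) *ᵥ degree w
        + ∑ x, ∑ x', w x x' ^ 2 / (degree w x * degree w x') := by
  simp only [mfLoss, div_sqrt_sub_sqrt_mul_sq (mul_pos (hw _) (hw _)), Finset.sum_add_distrib,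
    ← Finset.mul_sum, dotProduct_mulVec_eq_sum, map_apply]

end Loss

end NSCL

open NSCL in
theorem nscl_loss_eq_mf_loss_add_const_general
    {Xl Xu X Yl : Type*} [Fintype Xl] [Fintype Xu] [Fintype X] [Fintype Yl]
    (α β : ℝ) {p : Yl → Xl → ℝ} (pu : Xu → ℝ) {Tl : Xl → X → ℝ} {Tu : Xu → X → ℝ}
    (hp : ∀ i, ∑ xb, p i xb = 1) (hTl : ∀ xb, ∑ x, Tl xb x = 1) (hTu : ∀ xb, ∑ x, Tu xb x = 1)
    {w : Matrix X X ℝ} (hw : w = edgeWeight α β p pu Tl Tu) (hdeg : ∀ x, 0 < degree w x)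
    {K : Matrix X X ℝ} (hK : K.IsSymm) :
    mfLoss w K =
      nsclLoss α β p pu Tl Tu K + ∑ x, ∑ x', w x x' ^ 2 / (degree w x * degree w x') := by
  rw [mfLoss_eq_sum_mul_add_dotProduct_add hdeg,
    nsclLoss_eq_sum_edgeWeight_mul_add_dotProduct α β pu hp hTl hTu hK, ← hw]

/-- **NCD Spectral Contrastive Loss decomposition.**
For every feature map `f : X → ℝ^k`, the matrix-factorization loss satisfies
`L_mf(f) = L_nscl(f) + C`, where `C = Σ_{x,x'} w(x,x')² / (w(x)·w(x'))` is a
constant not depending on `f`. -/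
theorem nscl_loss_eq_mf_loss_add_const
    {Xl Xu X Yl : Type*} [Fintype Xl] [Fintype Xu] [Fintype X] [Fintype Yl]
    (k : ℕ)
    (p : Yl → Xl → ℝ) (pu : Xu → ℝ)
    (Tl : Xl → X → ℝ) (Tu : Xu → X → ℝ)
    (hp_nonneg : ∀ i xb, 0 ≤ p i xb) (hp_sum : ∀ i, ∑ xb, p i xb = 1)
    (hpu_nonneg : ∀ xb, 0 ≤ pu xb) (hpu_sum : ∑ xb, pu xb = 1)
    (hTl_nonneg : ∀ xb x, 0 ≤ Tl xb x) (hTl_sum : ∀ xb, ∑ x, Tl xb x = 1)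
    (hTu_nonneg : ∀ xb x, 0 ≤ Tu xb x) (hTu_sum : ∀ xb, ∑ x, Tu xb x = 1)
    (α β : ℝ) (hα : 0 < α) (hβ : 0 < β)
    (w : X → X → ℝ)
    (hw : ∀ x x', w x x' =
      α * ∑ i, ∑ xb, ∑ xb', p i xb * p i xb' * Tl xb x * Tl xb' x'
      + β * ∑ xb, pu xb * Tu xb x * Tu xb x')
    (wt : X → ℝ) (hwt : ∀ x, wt x = ∑ x', w x x')
    (hwt_pos : ∀ x, 0 < wt x)
    (f : X → Fin k → ℝ) :
    -- L_mf(f)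
    ∑ x, ∑ x', (w x x' / Real.sqrt (wt x * wt x')
        - Real.sqrt (wt x * wt x') * ∑ j, f x j * f x' j) ^ 2
    =
    -- L_nscl(f)
    (- 2 * α * (∑ i, ∑ xb, ∑ xb', ∑ x, ∑ xp,
          p i xb * p i xb' * Tl xb x * Tl xb' xp * ∑ j, f x j * f xp j)
      - 2 * β * (∑ xb, ∑ x, ∑ xp,
          pu xb * Tu xb x * Tu xb xp * ∑ j, f x j * f xp j)
      + α ^ 2 * (∑ i, ∑ i', ∑ xb, ∑ xb', ∑ x, ∑ xm,
          p i xb * p i' xb' * Tl xb x * Tl xb' xm * (∑ j, f x j * f xm j) ^ 2)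
      + 2 * α * β * (∑ i, ∑ xb, ∑ xbu, ∑ x, ∑ xm,
          p i xb * pu xbu * Tl xb x * Tu xbu xm * (∑ j, f x j * f xm j) ^ 2)
      + β ^ 2 * (∑ xb, ∑ xb', ∑ x, ∑ xm,
          pu xb * pu xb' * Tu xb x * Tu xb' xm * (∑ j, f x j * f xm j) ^ 2))
    -- + C, a constant not depending on f
    + ∑ x, ∑ x', (w x x') ^ 2 / (wt x * wt x') := by
  obtain rfl : wt = NSCL.degree w := funext hwt
  exact nscl_loss_eq_mf_loss_add_const_general α β pu hp_sum hTl_sum hTu_sum (funext₂ hw) hwt_pos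
    (.ext fun x x' => dotProduct_comm (f x') (f x))
end

section
/- For every y ∈ ℝ^{N_u}: the infimum over μ ∈ ℝ^k of ‖y − U*·μ‖₂² equals the infimum over ζ ∈ ℝ^{N_l} of ‖(L♭)ᵀ·ζ + (U♭)ᵀ·y‖₂², and both equal the squared Euclidean distance from the vector (U♭)ᵀ·y ∈ ℝ^{N−k} to the column space of (L♭)ᵀ (equivalently, the squared norm of the component of (U♭)ᵀ·y orthogonal to the column space of (L♭)ᵀ). -/
open Matrix

/-!
Write `V = [L⋆ L♭; U⋆ U♭]`. A block of a unitary matrix is a contraction, and so is its adjoint.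
Orthonormality of the columns shows that `ζ = L⋆ μ` satisfies `L♭ᴴ ζ + U♭ᴴ y = U♭ᴴ (y - U⋆ μ)`;
orthonormality of the rows shows that `μ = L⋆ᴴ ζ + U⋆ᴴ y` satisfies
`y - U⋆ μ = U♭ (L♭ᴴ ζ + U♭ᴴ y)`. Hence each value of either minimisation problem is bounded below
by a value of the other one.
-/

section StarRing

variable {l u k m R : Type*} [Ring R] [StarRing R]

theorem star_mulVec_dotProduct_mulVec [Fintype l] [Fintype m] (A : Matrix l m R) (x : m → R) :
    star (A *ᵥ x) ⬝ᵥ (A *ᵥ x) = star x ⬝ᵥ ((Aᴴ * A) *ᵥ x) := by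
  rw [star_mulVec, ← dotProduct_mulVec, mulVec_mulVec]

theorem star_mulVec_dotProduct_mulVec_le [Fintype l] [Fintype u] [Fintype m] [DecidableEq m]
    [PartialOrder R] [StarOrderedRing R] {A : Matrix l m R} {B : Matrix u m R}
    (h : Aᴴ * A + Bᴴ * B = 1) (x : m → R) :
    star (B *ᵥ x) ⬝ᵥ (B *ᵥ x) ≤ star x ⬝ᵥ x :=
  calc star (B *ᵥ x) ⬝ᵥ (B *ᵥ x)
      ≤ star (A *ᵥ x) ⬝ᵥ (A *ᵥ x) + star (B *ᵥ x) ⬝ᵥ (B *ᵥ x) :=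
        le_add_of_nonneg_left (dotProduct_star_self_nonneg _)
    _ = star x ⬝ᵥ x := by
        rw [star_mulVec_dotProduct_mulVec, star_mulVec_dotProduct_mulVec, ← dotProduct_add,
          ← add_mulVec, h, one_mulVec]

theorem toBlocks_conjTranspose_mul_of_conjTranspose_mul_eq_one [Fintype l] [Fintype u]
    [DecidableEq k] [DecidableEq m] {V : Matrix (l ⊕ u) (k ⊕ m) R} (hV : Vᴴ * V = 1) :
    V.toBlocks₁₂ᴴ * V.toBlocks₁₁ + V.toBlocks₂₂ᴴ * V.toBlocks₂₁ = 0 ∧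
      V.toBlocks₁₂ᴴ * V.toBlocks₁₂ + V.toBlocks₂₂ᴴ * V.toBlocks₂₂ = 1 := by
  rw [← fromBlocks_toBlocks V, fromBlocks_conjTranspose, fromBlocks_multiply, ← fromBlocks_one,
    fromBlocks_inj] at hV
  exact hV.2.2

theorem toBlocks_mul_conjTranspose_of_mul_conjTranspose_eq_one [Fintype k] [Fintype m]
    [DecidableEq l] [DecidableEq u] {V : Matrix (l ⊕ u) (k ⊕ m) R} (hV : V * Vᴴ = 1) :
    V.toBlocks₂₁ * V.toBlocks₁₁ᴴ + V.toBlocks₂₂ * V.toBlocks₁₂ᴴ = 0 ∧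
      V.toBlocks₂₁ * V.toBlocks₂₁ᴴ + V.toBlocks₂₂ * V.toBlocks₂₂ᴴ = 1 := by
  rw [← fromBlocks_toBlocks V, fromBlocks_conjTranspose, fromBlocks_multiply, ← fromBlocks_one,
    fromBlocks_inj] at hV
  exact hV.2.2

theorem toBlocks_conjTranspose_mulVec_add_eq [Fintype l] [Fintype u] [Fintype k]
    [DecidableEq k] [DecidableEq m] {V : Matrix (l ⊕ u) (k ⊕ m) R} (hV : Vᴴ * V = 1)
    (y : u → R) (μ : k → R) :
    V.toBlocks₁₂ᴴ *ᵥ (V.toBlocks₁₁ *ᵥ μ) + V.toBlocks₂₂ᴴ *ᵥ y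
      = V.toBlocks₂₂ᴴ *ᵥ (y - V.toBlocks₂₁ *ᵥ μ) := by
  have columns_orthogonal := (toBlocks_conjTranspose_mul_of_conjTranspose_mul_eq_one hV).1
  rw [mulVec_mulVec, eq_neg_of_add_eq_zero_left columns_orthogonal, neg_mulVec, mulVec_sub,
    mulVec_mulVec, neg_add_eq_sub]

theorem sub_toBlocks_mulVec_eq [Fintype l] [Fintype u] [Fintype k] [Fintype m]
    [DecidableEq l] [DecidableEq u] {V : Matrix (l ⊕ u) (k ⊕ m) R} (hV : V * Vᴴ = 1)
    (y : u → R) (ζ : l → R) :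
    y - V.toBlocks₂₁ *ᵥ (V.toBlocks₁₁ᴴ *ᵥ ζ + V.toBlocks₂₁ᴴ *ᵥ y)
      = V.toBlocks₂₂ *ᵥ (V.toBlocks₁₂ᴴ *ᵥ ζ + V.toBlocks₂₂ᴴ *ᵥ y) := by
  obtain ⟨rows_orthogonal, rows_normalized⟩ :=
    toBlocks_mul_conjTranspose_of_mul_conjTranspose_eq_one hV
  simp only [mulVec_add, mulVec_mulVec]
  rw [eq_neg_of_add_eq_zero_left rows_orthogonal, eq_sub_of_add_eq rows_normalized, neg_mulVec,
    sub_mulVec, one_mulVec]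
  abel

end StarRing

theorem setOf_exists_mulVec_add_eq_setOf_exists_mem_range {l m R α : Type*} [Fintype l]
    [CommRing R] (A : Matrix m l R) (c : m → R) (f : (m → R) → α) :
    {r | ∃ ζ, r = f (A *ᵥ ζ + c)} = {r | ∃ v ∈ LinearMap.range A.mulVecLin, r = f (c - v)} := by
  ext r
  simp only [Set.mem_ofPred_eq, LinearMap.mem_range, exists_exists_eq_and, mulVecLin_apply]
  refine (Equiv.neg _).exists_congr fun ζ ↦ ?_
  rw [Equiv.neg_apply, mulVec_neg, sub_neg_eq_add, add_comm]

section RCLike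

variable {l u k m 𝕜 : Type*} [Fintype l] [Fintype u] [Fintype k] [Fintype m] [RCLike 𝕜]

theorem ofReal_sum_norm_sq (x : m → 𝕜) : ((∑ i, ‖x i‖ ^ 2 : ℝ) : 𝕜) = star x ⬝ᵥ x := by
  simp [dotProduct, RCLike.conj_mul]

open scoped ComplexOrder in
theorem sum_norm_sq_mulVec_le [DecidableEq m] {A : Matrix l m 𝕜} {B : Matrix u m 𝕜}
    (h : Aᴴ * A + Bᴴ * B = 1) (x : m → 𝕜) : ∑ i, ‖(B *ᵥ x) i‖ ^ 2 ≤ ∑ a, ‖x a‖ ^ 2 := by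
  have h_le := star_mulVec_dotProduct_mulVec_le h x
  rwa [← ofReal_sum_norm_sq, ← ofReal_sum_norm_sq, RCLike.ofReal_le_ofReal] at h_le

variable [DecidableEq l] [DecidableEq u] [DecidableEq k] [DecidableEq m]
  {V : Matrix (l ⊕ u) (k ⊕ m) 𝕜}

theorem exists_sum_norm_sq_mulVec_add_le_residual (hV : Vᴴ * V = 1) (hV' : V * Vᴴ = 1)
    (y : u → 𝕜) (μ : k → 𝕜) :
    ∃ ζ : l → 𝕜, ∑ a, ‖(V.toBlocks₁₂ᴴ *ᵥ ζ + V.toBlocks₂₂ᴴ *ᵥ y) a‖ ^ 2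
      ≤ ∑ i, ‖(y - V.toBlocks₂₁ *ᵥ μ) i‖ ^ 2 := by
  have rows_normalized := (toBlocks_mul_conjTranspose_of_mul_conjTranspose_eq_one hV').2
  refine ⟨V.toBlocks₁₁ *ᵥ μ, ?_⟩
  rw [toBlocks_conjTranspose_mulVec_add_eq hV]
  exact sum_norm_sq_mulVec_le (A := V.toBlocks₂₁ᴴ) (by simpa using rows_normalized) _

theorem exists_residual_le_sum_norm_sq_mulVec_add (hV : Vᴴ * V = 1) (hV' : V * Vᴴ = 1)
    (y : u → 𝕜) (ζ : l → 𝕜) :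
    ∃ μ : k → 𝕜, ∑ i, ‖(y - V.toBlocks₂₁ *ᵥ μ) i‖ ^ 2
      ≤ ∑ a, ‖(V.toBlocks₁₂ᴴ *ᵥ ζ + V.toBlocks₂₂ᴴ *ᵥ y) a‖ ^ 2 := by
  have columns_normalized := (toBlocks_conjTranspose_mul_of_conjTranspose_mul_eq_one hV).2
  refine ⟨V.toBlocks₁₁ᴴ *ᵥ ζ + V.toBlocks₂₁ᴴ *ᵥ y, ?_⟩
  rw [sub_toBlocks_mulVec_eq hV']
  exact sum_norm_sq_mulVec_le columns_normalized _

theorem residual_eq_dist_to_extra_knowledge_general (hV : Vᴴ * V = 1) (hV' : V * Vᴴ = 1)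
    (y : u → 𝕜) :
    sInf {r : ℝ | ∃ μ : k → 𝕜, r = ∑ i, ‖(y - V.toBlocks₂₁ *ᵥ μ) i‖ ^ 2}
      = sInf {r : ℝ | ∃ ζ : l → 𝕜, r = ∑ a, ‖(V.toBlocks₁₂ᴴ *ᵥ ζ + V.toBlocks₂₂ᴴ *ᵥ y) a‖ ^ 2}
    ∧ sInf {r : ℝ | ∃ μ : k → 𝕜, r = ∑ i, ‖(y - V.toBlocks₂₁ *ᵥ μ) i‖ ^ 2}
      = sInf {r : ℝ | ∃ v ∈ LinearMap.range (V.toBlocks₁₂ᴴ).mulVecLin,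
          r = ∑ a, ‖(V.toBlocks₂₂ᴴ *ᵥ y - v) a‖ ^ 2} := by
  rw [← setOf_exists_mulVec_add_eq_setOf_exists_mem_range V.toBlocks₁₂ᴴ (V.toBlocks₂₂ᴴ *ᵥ y)
    fun x ↦ ∑ a, ‖x a‖ ^ 2, and_self]
  apply csInf_eq_csInf_of_forall_exists_le
  · rintro _ ⟨μ, rfl⟩
    obtain ⟨ζ, hζ⟩ := exists_sum_norm_sq_mulVec_add_le_residual hV hV' y μ
    exact ⟨_, ⟨ζ, rfl⟩, hζ⟩
  · rintro _ ⟨ζ, rfl⟩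
    obtain ⟨μ, hμ⟩ := exists_residual_le_sum_norm_sq_mulVec_add hV hV' y ζ
    exact ⟨_, ⟨μ, rfl⟩, hμ⟩

end RCLike

/-- For an orthogonal matrix `V` partitioned into blocks `L*, U*, L♭, U♭`, the
least-squares residual `min_μ ‖y − U*μ‖²` equals `min_ζ ‖(L♭)ᵀζ + (U♭)ᵀy‖²`, and
both equal the squared Euclidean distance from `(U♭)ᵀy` to the column space of
`(L♭)ᵀ`. -/
theorem residual_eq_dist_to_extra_knowledge
    (Nl Nu k m : ℕ) (hkm : k + m = Nl + Nu)
    (V : Matrix (Fin Nl ⊕ Fin Nu) (Fin k ⊕ Fin m) ℝ)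
    (hV : Vᵀ * V = 1)
    (Ustar : Matrix (Fin Nu) (Fin k) ℝ)
    (hUstar : ∀ i a, Ustar i a = V (Sum.inr i) (Sum.inl a))
    (Lb : Matrix (Fin Nl) (Fin m) ℝ)
    (hLb : ∀ i a, Lb i a = V (Sum.inl i) (Sum.inr a))
    (Ub : Matrix (Fin Nu) (Fin m) ℝ)
    (hUb : ∀ i a, Ub i a = V (Sum.inr i) (Sum.inr a))
    (y : Fin Nu → ℝ) :
    sInf {r : ℝ | ∃ μ : Fin k → ℝ, r = ∑ i, (y i - (Ustar *ᵥ μ) i) ^ 2}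
      = sInf {r : ℝ | ∃ ζ : Fin Nl → ℝ, r = ∑ a, ((Lbᵀ *ᵥ ζ) a + (Ubᵀ *ᵥ y) a) ^ 2}
    ∧ sInf {r : ℝ | ∃ μ : Fin k → ℝ, r = ∑ i, (y i - (Ustar *ᵥ μ) i) ^ 2}
      = sInf {r : ℝ | ∃ v ∈ LinearMap.range (Lbᵀ).mulVecLin,
          r = ∑ a, ((Ubᵀ *ᵥ y) a - v a) ^ 2} := by
  obtain rfl : Ustar = V.toBlocks₂₁ := Matrix.ext hUstar
  obtain rfl : Lb = V.toBlocks₁₂ := Matrix.ext hLb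
  obtain rfl : Ub = V.toBlocks₂₂ := Matrix.ext hUb
  have hV' : V * Vᵀ = 1 := (mul_eq_one_comm_of_card_eq _ _ _ (by simp [hkm])).1 hV
  rw [← conjTranspose_eq_transpose_of_trivial] at hV hV'
  simpa using residual_eq_dist_to_extra_knowledge_general hV hV' y
end

section
/- For every y ∈ ℝ^{N_u}: the infimum over μ ∈ ℝ^k of ‖y − U*·μ‖₂² equals 0 if and only if the vector (U♭)ᵀ·y ∈ ℝ^{N−k} lies in the column space of (L♭)ᵀ (i.e., the row space of L♭). -/
open Matrix

/-!
Since `V` is orthogonal, `x ↦ V x` is a bijection with inverse `z ↦ Vᵀ z`. Hence `y = U* μ` for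
some `μ` exactly when some vector `z = (-w, y)` has a preimage `(μ, 0)`, that is, when the last
block `(U♭)ᵀ y - (L♭)ᵀ w` of `Vᵀ z` vanishes for some `w`. The residual, a squared distance to the
column space of `U*`, is zero exactly when `y` lies in that space because the space is closed.
-/

theorem sInf_image_dist_pow {X : Type*} [PseudoMetricSpace X] {s : Set X} (hs : s.Nonempty)
    (y : X) (n : ℕ) :
    sInf ((fun x ↦ dist y x ^ n) '' s) = Metric.infDist y s ^ n := by
  have hbdd : BddBelow (dist y '' s) := ⟨0, by rintro _ ⟨x, -, rfl⟩; exact dist_nonneg⟩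
  have hmono : MonotoneOn (· ^ n : ℝ → ℝ) (dist y '' s) := by
    rintro _ ⟨x, -, rfl⟩ _ - hle
    exact pow_le_pow_left₀ dist_nonneg hle n
  rw [Metric.infDist_eq_iInf, ← sInf_image', hmono.map_csInf_of_continuousWithinAt
    (continuous_pow n).continuousWithinAt (hs.image _) hbdd, Set.image_image]

theorem sInf_image_sum_norm_sub_sq_eq_zero_iff {ι : Type*} [Fintype ι] {E : ι → Type*}
    [∀ i, SeminormedAddCommGroup (E i)] {s : Set (∀ i, E i)} (hs : s.Nonempty) (y : ∀ i, E i) :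
    sInf ((fun x ↦ ∑ i, ‖y i - x i‖ ^ 2) '' s) = 0 ↔ y ∈ closure s := by
  let toL2 : (∀ i, E i) ≃ₜ PiLp 2 E := (PiLp.homeomorph 2 E).symm
  have hdist (x : ∀ i, E i) : ∑ i, ‖y i - x i‖ ^ 2 = dist (toL2 y) (toL2 x) ^ 2 := by
    rw [dist_eq_norm, PiLp.norm_sq_eq_of_L2]
    rfl
  have himage : (fun x ↦ ∑ i, ‖y i - x i‖ ^ 2) '' s =
      (fun z ↦ dist (toL2 y) z ^ 2) '' (toL2 '' s) := by
    simp only [hdist, Set.image_image]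
  rw [himage, sInf_image_dist_pow (hs.image _), pow_eq_zero_iff two_ne_zero,
    ← Metric.mem_closure_iff_infDist_zero (hs.image _), ← toL2.image_closure,
    toL2.injective.mem_set_image]

theorem sInf_sum_norm_sub_mulVec_sq_eq_zero_iff {𝕜 m n : Type*} [RCLike 𝕜] [Fintype m]
    [Fintype n] (A : Matrix m n 𝕜) (y : m → 𝕜) :
    sInf {r : ℝ | ∃ x, r = ∑ i, ‖y i - (A *ᵥ x) i‖ ^ 2} = 0 ↔ y ∈ Set.range A.mulVec := by
  have hclosed : IsClosed (Set.range A.mulVec) :=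
    (LinearMap.range A.mulVecLin).closed_of_finiteDimensional
  have himage : {r : ℝ | ∃ x, r = ∑ i, ‖y i - (A *ᵥ x) i‖ ^ 2} =
      (fun z ↦ ∑ i, ‖y i - z i‖ ^ 2) '' Set.range A.mulVec := by
    ext r
    simp only [Set.mem_ofPred_eq, Set.exists_range_iff, Set.mem_image, eq_comm]
  rw [himage, sInf_image_sum_norm_sub_sq_eq_zero_iff (Set.range_nonempty _), hclosed.closure_eq]

theorem mem_range_mulVec_toBlocks₂₁_iff {R l u k m : Type*} [Ring R] [Fintype l] [Fintype u]
    [Fintype k] [Fintype m] [DecidableEq l] [DecidableEq u] [DecidableEq k] [DecidableEq m]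
    {V : Matrix (l ⊕ u) (k ⊕ m) R} {W : Matrix (k ⊕ m) (l ⊕ u) R}
    (hVW : V * W = 1) (hWV : W * V = 1) (y : u → R) :
    y ∈ Set.range V.toBlocks₂₁.mulVec ↔
      W.toBlocks₂₂ *ᵥ y ∈ Set.range W.toBlocks₂₁.mulVec := by
  rw [← fromBlocks_toBlocks V, ← fromBlocks_toBlocks W, fromBlocks_multiply, ← fromBlocks_one,
    fromBlocks_inj] at hVW hWV
  obtain ⟨-, -, hVW₂₁, hVW₂₂⟩ := hVW
  obtain ⟨-, -, hWV₂₁, -⟩ := hWV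
  constructor
  · rintro ⟨μ, rfl⟩
    refine ⟨-(V.toBlocks₁₁ *ᵥ μ), ?_⟩
    rw [mulVec_neg, mulVec_mulVec, mulVec_mulVec, ← neg_mulVec, neg_eq_of_add_eq_zero_right hWV₂₁]
  · rintro ⟨w, hw⟩
    refine ⟨W.toBlocks₁₂ *ᵥ y - W.toBlocks₁₁ *ᵥ w, ?_⟩
    calc V.toBlocks₂₁ *ᵥ (W.toBlocks₁₂ *ᵥ y - W.toBlocks₁₁ *ᵥ w)
        = (V.toBlocks₂₁ * W.toBlocks₁₂) *ᵥ y + -(V.toBlocks₂₁ * W.toBlocks₁₁) *ᵥ w := by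
          rw [mulVec_sub, mulVec_mulVec, mulVec_mulVec, neg_mulVec, sub_eq_add_neg]
      _ = (V.toBlocks₂₁ * W.toBlocks₁₂) *ᵥ y + V.toBlocks₂₂ *ᵥ W.toBlocks₂₁ *ᵥ w := by
          rw [neg_eq_of_add_eq_zero_right hVW₂₁, mulVec_mulVec]
      _ = (V.toBlocks₂₁ * W.toBlocks₁₂ + V.toBlocks₂₂ * W.toBlocks₂₂) *ᵥ y := by
          rw [hw, mulVec_mulVec, add_mulVec]
      _ = y := by rw [hVW₂₂, one_mulVec]

theorem residual_eq_zero_iff_mem_rowspace_general {𝕜 l u k m : Type*} [RCLike 𝕜] [Fintype l]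
    [Fintype u] [Fintype k] [Fintype m] [DecidableEq k] [DecidableEq m]
    (hcard : Fintype.card (k ⊕ m) = Fintype.card (l ⊕ u))
    {V : Matrix (l ⊕ u) (k ⊕ m) 𝕜} (hV : Vᴴ * V = 1) (y : u → 𝕜) :
    sInf {r : ℝ | ∃ μ, r = ∑ i, ‖y i - (V.toBlocks₂₁ *ᵥ μ) i‖ ^ 2} = 0 ↔
      V.toBlocks₂₂ᴴ *ᵥ y ∈ LinearMap.range V.toBlocks₁₂ᴴ.mulVecLin := by
  classical
  have hV' : V * Vᴴ = 1 := (mul_eq_one_comm_of_card_eq _ _ _ hcard).mp hV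
  exact (sInf_sum_norm_sub_mulVec_sq_eq_zero_iff _ y).trans
    (mem_range_mulVec_toBlocks₂₁_iff hV' hV y)

/-- For an orthogonal matrix `V` partitioned into blocks `L*, U*, L♭, U♭`, the
least-squares residual `min_μ ‖y − U*μ‖²` is zero if and only if `(U♭)ᵀy` lies in
the column space of `(L♭)ᵀ` (i.e. the row space of `L♭`). -/
theorem residual_eq_zero_iff_mem_rowspace
    (Nl Nu k m : ℕ) (hkm : k + m = Nl + Nu)
    (V : Matrix (Fin Nl ⊕ Fin Nu) (Fin k ⊕ Fin m) ℝ)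
    (hV : Vᵀ * V = 1)
    (Ustar : Matrix (Fin Nu) (Fin k) ℝ)
    (hUstar : ∀ i a, Ustar i a = V (Sum.inr i) (Sum.inl a))
    (Lb : Matrix (Fin Nl) (Fin m) ℝ)
    (hLb : ∀ i a, Lb i a = V (Sum.inl i) (Sum.inr a))
    (Ub : Matrix (Fin Nu) (Fin m) ℝ)
    (hUb : ∀ i a, Ub i a = V (Sum.inr i) (Sum.inr a))
    (y : Fin Nu → ℝ) :
    sInf {r : ℝ | ∃ μ : Fin k → ℝ, r = ∑ i, (y i - (Ustar *ᵥ μ) i) ^ 2} = 0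
      ↔ (Ubᵀ *ᵥ y) ∈ LinearMap.range (Lbᵀ).mulVecLin := by
  obtain rfl : Ustar = V.toBlocks₂₁ := Matrix.ext hUstar
  obtain rfl : Lb = V.toBlocks₁₂ := Matrix.ext hLb
  obtain rfl : Ub = V.toBlocks₂₂ := Matrix.ext hUb
  simpa only [conjTranspose_eq_transpose_of_trivial, Real.norm_eq_abs, sq_abs] using
    residual_eq_zero_iff_mem_rowspace_general (by simpa using hkm) hV y
end

section
/- Suppose additionally that the first N_l rows of the first k columns of V are all identical (i.e., all rows of L* are equal), and that 𝔩♭ := (L♭)ᵀ·𝟙_{N_l} ∈ ℝ^{N−k} is nonzero, where 𝟙_{N_l} is the all-ones vector. Then for every y ∈ ℝ^{N_u}: the infimum over μ ∈ ℝ^k of ‖y − U*·μ‖₂² equals ‖(U♭)ᵀ·y‖₂² − (⟨𝔩♭, (U♭)ᵀ·y⟩)² / ‖𝔩♭‖₂². Equivalently, writing κ for the cosine of the angle between (U♭)ᵀ·y and 𝔩♭ (when (U♭)ᵀ·y ≠ 0), the residual equals (1 − κ²)·‖(U♭)ᵀ·y‖₂². -/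
open Matrix

/-!
Write `V = [L* L♭; U* U♭]` and `b = (U♭)ᵀ y`, and let `w = b - (L♭)ᵀ c`. Orthogonality of `V` gives
`y - U♭ w = U* ((U*)ᵀ y - (L*)ᵀ c)` and `(U*)ᵀ (U♭ w) = -(L*)ᵀ (L♭ w)`. So as soon as `L♭ w` is
orthogonal to `c` and to the columns of `L*`, the vector `U♭ w` is the least-squares residual of
`y`, and its squared norm is `⟨U♭ w, y⟩ = ⟨w, b⟩ = ‖w‖²`. If the columns of `L*` are multiples of a
vector `u`, both conditions hold for the multiple `c` of `u` that makes `w` the component of `b`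
orthogonal to `𝔩♭ = (L♭)ᵀ u`.
-/

section Residual

variable {R n k : Type*} [CommRing R] [LinearOrder R] [IsStrictOrderedRing R]
  [Fintype n] [Fintype k]

theorem isLeast_residual_of_transpose_mulVec_eq_zero (A : Matrix n k R) (y : n → R) (μ₀ : k → R)
    (hnormal : Aᵀ *ᵥ (y - A *ᵥ μ₀) = 0) :
    IsLeast (Set.range fun μ => (y - A *ᵥ μ) ⬝ᵥ (y - A *ᵥ μ))
      ((y - A *ᵥ μ₀) ⬝ᵥ (y - A *ᵥ μ₀)) := by
  refine ⟨⟨μ₀, rfl⟩, ?_⟩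
  rintro _ ⟨μ, rfl⟩
  set z := y - A *ᵥ μ₀
  have hsplit : y - A *ᵥ μ = z + A *ᵥ (μ₀ - μ) := by
    rw [mulVec_sub]
    exact (sub_add_sub_cancel _ _ _).symm
  have horth : z ⬝ᵥ A *ᵥ (μ₀ - μ) = 0 := by
    rw [← dotProduct_transpose_mulVec, hnormal, dotProduct_zero]
  calc z ⬝ᵥ z
      ≤ z ⬝ᵥ z + A *ᵥ (μ₀ - μ) ⬝ᵥ A *ᵥ (μ₀ - μ) :=
        le_add_of_nonneg_right (Finset.sum_nonneg fun _ _ => mul_self_nonneg _)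
    _ = (y - A *ᵥ μ) ⬝ᵥ (y - A *ᵥ μ) := by
        rw [hsplit, add_dotProduct, dotProduct_add, dotProduct_add,
          dotProduct_comm (A *ᵥ (μ₀ - μ)) z, horth, add_zero, zero_add]

end Residual

section Projection

variable {K m : Type*} [Field K] [Fintype m] {l : m → K}

theorem dotProduct_sub_div_smul_self (hl : l ⬝ᵥ l ≠ 0) (b : m → K) :
    l ⬝ᵥ (b - (l ⬝ᵥ b / l ⬝ᵥ l) • l) = 0 := by
  rw [dotProduct_sub, dotProduct_smul, smul_eq_mul, div_mul_cancel₀ _ hl, sub_self]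

theorem sub_div_smul_dotProduct_self (hl : l ⬝ᵥ l ≠ 0) (b : m → K) :
    (b - (l ⬝ᵥ b / l ⬝ᵥ l) • l) ⬝ᵥ (b - (l ⬝ᵥ b / l ⬝ᵥ l) • l) =
      b ⬝ᵥ b - (l ⬝ᵥ b) ^ 2 / l ⬝ᵥ l := by
  nth_rw 1 [sub_dotProduct]
  rw [smul_dotProduct, dotProduct_sub_div_smul_self hl, smul_zero, sub_zero, dotProduct_sub,
    dotProduct_smul, dotProduct_comm b l, smul_eq_mul, sq, mul_div_right_comm]

end Projection

section OrthogonalBlocks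

variable {R l n k m : Type*} {Ls : Matrix l k R} {Lb : Matrix l m R} {Us : Matrix n k R}
  {Ub : Matrix n m R}

theorem transpose_mulVec_mulVec_of_fromBlocks [CommRing R] [Fintype l] [Fintype n] [Fintype m]
    [DecidableEq k] [DecidableEq m]
    (hV : (fromBlocks Ls Lb Us Ub)ᵀ * fromBlocks Ls Lb Us Ub = 1) (w : m → R) :
    Usᵀ *ᵥ (Ub *ᵥ w) = -(Lsᵀ *ᵥ (Lb *ᵥ w)) := by
  rw [fromBlocks_transpose, fromBlocks_multiply, ← fromBlocks_one, fromBlocks_inj] at hV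
  rw [mulVec_mulVec, mulVec_mulVec, ← neg_mulVec, eq_neg_of_add_eq_zero_right hV.2.1]

theorem sub_mulVec_sub_of_fromBlocks [CommRing R] [Fintype l] [Fintype n] [Fintype k] [Fintype m]
    [DecidableEq l] [DecidableEq n]
    (hV : fromBlocks Ls Lb Us Ub * (fromBlocks Ls Lb Us Ub)ᵀ = 1) (y : n → R) (c : l → R) :
    y - Us *ᵥ (Usᵀ *ᵥ y - Lsᵀ *ᵥ c) = Ub *ᵥ (Ubᵀ *ᵥ y - Lbᵀ *ᵥ c) := by
  rw [fromBlocks_transpose, fromBlocks_multiply, ← fromBlocks_one, fromBlocks_inj] at hV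
  obtain ⟨-, -, hUL, hUU⟩ := hV
  have hc : Us *ᵥ (Lsᵀ *ᵥ c) + Ub *ᵥ (Lbᵀ *ᵥ c) = 0 := by
    rw [mulVec_mulVec, mulVec_mulVec, ← add_mulVec, hUL, zero_mulVec]
  have hy : Us *ᵥ (Usᵀ *ᵥ y) + Ub *ᵥ (Ubᵀ *ᵥ y) = y := by
    rw [mulVec_mulVec, mulVec_mulVec, ← add_mulVec, hUU, one_mulVec]
  rw [mulVec_sub, mulVec_sub, eq_neg_of_add_eq_zero_right hc, eq_sub_of_add_eq' hy]
  abel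

variable [Fintype l] [Fintype n] [Fintype k] [Fintype m]
  [DecidableEq l] [DecidableEq n] [DecidableEq k] [DecidableEq m]

theorem isLeast_residual_of_fromBlocks [CommRing R] [LinearOrder R] [IsStrictOrderedRing R]
    (hV : (fromBlocks Ls Lb Us Ub)ᵀ * fromBlocks Ls Lb Us Ub = 1)
    (hV' : fromBlocks Ls Lb Us Ub * (fromBlocks Ls Lb Us Ub)ᵀ = 1)
    {y : n → R} {c : l → R} {w : m → R} (hw : w = Ubᵀ *ᵥ y - Lbᵀ *ᵥ c)
    (hLs : Lsᵀ *ᵥ (Lb *ᵥ w) = 0) (hc : c ⬝ᵥ Lb *ᵥ w = 0) :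
    IsLeast (Set.range fun μ => (y - Us *ᵥ μ) ⬝ᵥ (y - Us *ᵥ μ)) (w ⬝ᵥ w) := by
  set μ₀ := Usᵀ *ᵥ y - Lsᵀ *ᵥ c
  have hresidual : y - Us *ᵥ μ₀ = Ub *ᵥ w := hw ▸ sub_mulVec_sub_of_fromBlocks hV' y c
  have hnormal : Usᵀ *ᵥ (Ub *ᵥ w) = 0 := by
    rw [transpose_mulVec_mulVec_of_fromBlocks hV, hLs, neg_zero]
  have hnorm : Ub *ᵥ w ⬝ᵥ Ub *ᵥ w = w ⬝ᵥ w :=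
    calc Ub *ᵥ w ⬝ᵥ Ub *ᵥ w
        = Ub *ᵥ w ⬝ᵥ y := by
          rw [← hresidual, dotProduct_sub, hresidual, ← dotProduct_transpose_mulVec, hnormal,
            dotProduct_zero, sub_zero]
      _ = w ⬝ᵥ (w + Lbᵀ *ᵥ c) := by
          rw [hw, sub_add_cancel, ← hw, dotProduct_transpose_mulVec, dotProduct_comm]
      _ = w ⬝ᵥ w := by
          rw [dotProduct_add, dotProduct_transpose_mulVec, hc, add_zero]
  rw [← hnorm, ← hresidual]
  exact isLeast_residual_of_transpose_mulVec_eq_zero Us y μ₀ (hresidual ▸ hnormal)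

theorem residual_eq_one_sub_cos_sq_general [Field R] [LinearOrder R] [IsStrictOrderedRing R]
    {u : l → R} {r : k → R}
    (hV : (fromBlocks (vecMulVec u r) Lb Us Ub)ᵀ * fromBlocks (vecMulVec u r) Lb Us Ub = 1)
    (hV' : fromBlocks (vecMulVec u r) Lb Us Ub * (fromBlocks (vecMulVec u r) Lb Us Ub)ᵀ = 1)
    (hu : Lbᵀ *ᵥ u ≠ 0) (y : n → R) :
    IsLeast (Set.range fun μ => (y - Us *ᵥ μ) ⬝ᵥ (y - Us *ᵥ μ))
      (Ubᵀ *ᵥ y ⬝ᵥ Ubᵀ *ᵥ y -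
        (Lbᵀ *ᵥ u ⬝ᵥ Ubᵀ *ᵥ y) ^ 2 / Lbᵀ *ᵥ u ⬝ᵥ Lbᵀ *ᵥ u) := by
  set lb := Lbᵀ *ᵥ u
  set b := Ubᵀ *ᵥ y
  have hlb_self : lb ⬝ᵥ lb ≠ 0 := dotProduct_self_eq_zero.not.2 hu
  set α := lb ⬝ᵥ b / lb ⬝ᵥ lb
  have horth : u ⬝ᵥ Lb *ᵥ (b - α • lb) = 0 := by
    rw [← dotProduct_transpose_mulVec, dotProduct_comm, dotProduct_sub_div_smul_self hlb_self]
  rw [← sub_div_smul_dotProduct_self hlb_self]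
  refine isLeast_residual_of_fromBlocks hV hV' (c := α • u) (by rw [mulVec_smul]) ?_ ?_
  · rw [transpose_vecMulVec, vecMulVec_mulVec, horth, MulOpposite.op_zero, zero_smul]
  · rw [smul_dotProduct, horth, smul_zero]

end OrthogonalBlocks

/-- When all rows of `L*` are identical and `𝔩♭ = (L♭)ᵀ𝟙 ≠ 0`, the least-squares
residual equals `‖(U♭)ᵀy‖² − ⟨𝔩♭,(U♭)ᵀy⟩²/‖𝔩♭‖²`, i.e. `(1 − κ²)·‖(U♭)ᵀy‖²` where
`κ` is the cosine of the angle between `(U♭)ᵀy` and `𝔩♭`. -/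
theorem residual_eq_one_sub_cos_sq
    (Nl Nu k m : ℕ) (hNl : 1 ≤ Nl) (hkm : k + m = Nl + Nu)
    (V : Matrix (Fin Nl ⊕ Fin Nu) (Fin k ⊕ Fin m) ℝ)
    (hV : Vᵀ * V = 1)
    (Ustar : Matrix (Fin Nu) (Fin k) ℝ)
    (hUstar : ∀ i a, Ustar i a = V (Sum.inr i) (Sum.inl a))
    (Lb : Matrix (Fin Nl) (Fin m) ℝ)
    (hLb : ∀ i a, Lb i a = V (Sum.inl i) (Sum.inr a))
    (Ub : Matrix (Fin Nu) (Fin m) ℝ)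
    (hUb : ∀ i a, Ub i a = V (Sum.inr i) (Sum.inr a))
    (hrows : ∀ i i' : Fin Nl, ∀ a : Fin k,
      V (Sum.inl i) (Sum.inl a) = V (Sum.inl i') (Sum.inl a))
    (lb : Fin m → ℝ) (hlb : lb = Lbᵀ *ᵥ (fun _ => 1))
    (hlb_ne : lb ≠ 0)
    (y : Fin Nu → ℝ) :
    sInf {r : ℝ | ∃ μ : Fin k → ℝ, r = ∑ i, (y i - (Ustar *ᵥ μ) i) ^ 2}
      = (∑ a, ((Ubᵀ *ᵥ y) a) ^ 2)
        - (∑ a, lb a * (Ubᵀ *ᵥ y) a) ^ 2 / (∑ a, (lb a) ^ 2) := by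
  obtain ⟨r, rfl⟩ : ∃ r, V = fromBlocks (vecMulVec (fun _ => 1) r) Lb Ustar Ub := by
    refine ⟨fun a => V (Sum.inl ⟨0, hNl⟩) (Sum.inl a), ?_⟩
    ext (i | i) (a | a)
    · simpa [vecMulVec_apply] using hrows i ⟨0, hNl⟩ a
    all_goals simp [hLb, hUstar, hUb]
  subst hlb
  have hV' := (mul_eq_one_comm_of_card_eq _ _ _ (by simpa using hkm)).1 hV
  simpa [Set.range, dotProduct, sq, eq_comm] using
    (residual_eq_one_sub_cos_sq_general hV hV' hlb_ne y).csInf_eq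
end

section
/- For every nonzero x ∈ ℝ^n: (min over pairs i,j ∈ {1,…,n} of 2√(ω_i·ω_j)/(ω_i + ω_j)) · ‖Ω·x‖₂ · ‖x‖₂ ≤ xᵀΩx ≤ ‖Ω·x‖₂ · ‖x‖₂. In particular, the cosine of the angle between x and Ωx is at least the minimum over all pairs i,j of 2√(ω_iω_j)/(ω_i+ω_j), and at most 1. -/
open Matrix

/-!
Let `m` and `M` be the least and greatest eigenvalues of a positive operator `T`. In an eigenbasis
`re ⟪T x - m x, M x - T x⟫ = ∑ i, (ω i - m) * (M - ω i) * ‖x i‖ ^ 2 ≥ 0`, that is,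
`‖T x‖ ^ 2 + m * M * ‖x‖ ^ 2 ≤ (m + M) * re ⟪x, T x⟫`. By AM-GM the left side is at least
`2 * √(m * M) * ‖T x‖ * ‖x‖`, so the pair `(m, M)` already gives the lower bound. The upper bound
is the Cauchy-Schwarz inequality.
-/

open RCLike
open scoped InnerProductSpace

section ReverseCauchySchwarz

variable {𝕜 E : Type*} [RCLike 𝕜] [SeminormedAddCommGroup E] [InnerProductSpace 𝕜 E]

theorem re_inner_sub_smul_smul_sub (x y : E) (m M : ℝ) :
    re ⟪y - (m : 𝕜) • x, (M : 𝕜) • x - y⟫_𝕜 =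
      (m + M) * re ⟪x, y⟫_𝕜 - (‖y‖ ^ 2 + m * M * ‖x‖ ^ 2) := by
  simp only [inner_sub_left, inner_sub_right, inner_smul_left, inner_smul_right, map_sub,
    conj_ofReal, re_ofReal_mul, inner_self_eq_norm_sq, inner_re_symm y x]
  ring

theorem two_mul_sqrt_mul_norm_mul_norm_le_add_mul_re_inner {x y : E} {m M : ℝ}
    (hmM : 0 ≤ m * M) (h : 0 ≤ re ⟪y - (m : 𝕜) • x, (M : 𝕜) • x - y⟫_𝕜) :
    2 * √(m * M) * (‖y‖ * ‖x‖) ≤ (m + M) * re ⟪x, y⟫_𝕜 :=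
  calc 2 * √(m * M) * (‖y‖ * ‖x‖)
      = 2 * ‖y‖ * (√(m * M) * ‖x‖) := by ring
    _ ≤ ‖y‖ ^ 2 + (√(m * M) * ‖x‖) ^ 2 := two_mul_le_add_sq _ _
    _ = ‖y‖ ^ 2 + m * M * ‖x‖ ^ 2 := by rw [mul_pow, Real.sq_sqrt hmM]
    _ ≤ (m + M) * re ⟪x, y⟫_𝕜 := by
      rwa [re_inner_sub_smul_smul_sub, sub_nonneg] at h

end ReverseCauchySchwarz

section Eigenbasis

variable {ι 𝕜 E : Type*} [Fintype ι] [RCLike 𝕜] [NormedAddCommGroup E] [InnerProductSpace 𝕜 E]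
  (b : OrthonormalBasis ι 𝕜 E) {T : E →ₗ[𝕜] E}

theorem repr_map_apply_of_map_basis_eq_smul {μ : ι → 𝕜} (hT : ∀ i, T (b i) = μ i • b i)
    (x : E) (i : ι) : b.repr (T x) i = μ i * b.repr x i := by
  classical
  conv_lhs => rw [← b.sum_repr x]
  simp [hT, Pi.single_apply, mul_comm]

theorem re_inner_map_sub_smul_smul_sub_map {ω : ι → ℝ} (hT : ∀ i, T (b i) = (ω i : 𝕜) • b i)
    (x : E) (m M : ℝ) :
    re ⟪T x - (m : 𝕜) • x, (M : 𝕜) • x - T x⟫_𝕜 =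
      ∑ i, (ω i - m) * (M - ω i) * ‖b.repr x i‖ ^ 2 := by
  rw [← b.repr.inner_map_map, PiLp.inner_apply, map_sum]
  refine Finset.sum_congr rfl fun i _ => ?_
  have left_coord : b.repr (T x - (m : 𝕜) • x) i = ((ω i - m : ℝ) : 𝕜) • b.repr x i := by
    simp only [map_sub, map_smul, PiLp.sub_apply, PiLp.smul_apply,
      repr_map_apply_of_map_basis_eq_smul b hT, smul_eq_mul, sub_mul]
  have right_coord : b.repr ((M : 𝕜) • x - T x) i = ((M - ω i : ℝ) : 𝕜) • b.repr x i := by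
    simp only [map_sub, map_smul, PiLp.sub_apply, PiLp.smul_apply,
      repr_map_apply_of_map_basis_eq_smul b hT, smul_eq_mul, sub_mul]
  rw [left_coord, right_coord, inner_smul_left, inner_smul_right, conj_ofReal, re_ofReal_mul,
    re_ofReal_mul, inner_self_eq_norm_sq, mul_assoc]

theorem re_inner_map_sub_smul_smul_sub_map_nonneg {ω : ι → ℝ}
    (hT : ∀ i, T (b i) = (ω i : 𝕜) • b i) {m M : ℝ} (hm : ∀ i, m ≤ ω i) (hM : ∀ i, ω i ≤ M)
    (x : E) :
    0 ≤ re ⟪T x - (m : 𝕜) • x, (M : 𝕜) • x - T x⟫_𝕜 := by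
  rw [re_inner_map_sub_smul_smul_sub_map b hT]
  exact Finset.sum_nonneg fun i _ =>
    mul_nonneg (mul_nonneg (sub_nonneg.2 (hm i)) (sub_nonneg.2 (hM i))) (sq_nonneg _)

theorem two_mul_sqrt_div_add_mul_norm_map_mul_norm_le {ω : ι → ℝ}
    (hT : ∀ i, T (b i) = (ω i : 𝕜) • b i) {m M : ℝ} (hm₀ : 0 < m) (hM₀ : 0 < M)
    (hm : ∀ i, m ≤ ω i) (hM : ∀ i, ω i ≤ M) (x : E) :
    2 * √(m * M) / (m + M) * (‖T x‖ * ‖x‖) ≤ re ⟪x, T x⟫_𝕜 := by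
  rw [div_mul_eq_mul_div, div_le_iff₀' (add_pos hm₀ hM₀)]
  exact two_mul_sqrt_mul_norm_mul_norm_le_add_mul_re_inner (mul_pos hm₀ hM₀).le
    (re_inner_map_sub_smul_smul_sub_map_nonneg b hT hm hM x)

theorem diagonal_quadratic_form_cosine_bounds_general [Nonempty ι] {ω : ι → ℝ}
    (hT : ∀ i, T (b i) = (ω i : 𝕜) • b i) (hω : ∀ i, 0 < ω i) (x : E) :
    Finset.univ.inf' Finset.univ_nonempty
        (fun p : ι × ι => 2 * √(ω p.1 * ω p.2) / (ω p.1 + ω p.2)) * ‖T x‖ * ‖x‖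
      ≤ re ⟪x, T x⟫_𝕜
    ∧ re ⟪x, T x⟫_𝕜 ≤ ‖T x‖ * ‖x‖ := by
  obtain ⟨i_min, h_min⟩ := Finite.exists_min ω
  obtain ⟨i_max, h_max⟩ := Finite.exists_max ω
  constructor
  · rw [mul_assoc]
    calc _ ≤ 2 * √(ω i_min * ω i_max) / (ω i_min + ω i_max) * (‖T x‖ * ‖x‖) := by
          gcongr
          exact Finset.inf'_le _ (Finset.mem_univ (i_min, i_max))
      _ ≤ re ⟪x, T x⟫_𝕜 :=
          two_mul_sqrt_div_add_mul_norm_map_mul_norm_le b hT (hω i_min) (hω i_max) h_min h_max x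
  · rw [mul_comm]
    exact re_inner_le_norm x (T x)

end Eigenbasis

theorem toEuclideanLin_diagonal_basisFun {ι 𝕜 : Type*} [Fintype ι] [DecidableEq ι] [RCLike 𝕜]
    (d : ι → 𝕜) (i : ι) :
    toEuclideanLin (diagonal d) (EuclideanSpace.basisFun ι 𝕜 i) =
      d i • EuclideanSpace.basisFun ι 𝕜 i := by
  ext j
  obtain rfl | hji := eq_or_ne j i
  · simp [mulVec_diagonal]
  · simp [mulVec_diagonal, hji]

/-- For a positive diagonal matrix `Ω = diag(ω)` and every nonzero `x`,
`(min_{i,j} 2√(ω_iω_j)/(ω_i+ω_j))·‖Ωx‖₂·‖x‖₂ ≤ xᵀΩx ≤ ‖Ωx‖₂·‖x‖₂`. -/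
theorem diagonal_quadratic_form_cosine_bounds
    (n : ℕ) (hn : 0 < n) (ω : Fin n → ℝ) (hω : ∀ i, 0 < ω i)
    (x : Fin n → ℝ) (hx : x ≠ 0) :
    (Finset.univ.inf' ⟨(⟨0, hn⟩, ⟨0, hn⟩), Finset.mem_univ _⟩
        (fun p : Fin n × Fin n => 2 * Real.sqrt (ω p.1 * ω p.2) / (ω p.1 + ω p.2)))
        * Real.sqrt (∑ i, ((Matrix.diagonal ω *ᵥ x) i) ^ 2)
        * Real.sqrt (∑ i, (x i) ^ 2)
      ≤ x ⬝ᵥ (Matrix.diagonal ω *ᵥ x)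
    ∧ x ⬝ᵥ (Matrix.diagonal ω *ᵥ x)
      ≤ Real.sqrt (∑ i, ((Matrix.diagonal ω *ᵥ x) i) ^ 2)
        * Real.sqrt (∑ i, (x i) ^ 2) := by
  have : Nonempty (Fin n) := ⟨⟨0, hn⟩⟩
  simpa [EuclideanSpace.norm_eq, EuclideanSpace.inner_toLp_toLp, dotProduct_comm x] using
    diagonal_quadratic_form_cosine_bounds_general (EuclideanSpace.basisFun (Fin n) ℝ)
      (toEuclideanLin_diagonal_basisFun ω) hω (WithLp.toLp 2 x)
end

section
/- Assume τ_c > 0, τ_s > 0, and 0 < t ≤ τ_c. Then the cubic g has a root in each of the three intervals (−τ_c − τ_s, 0), (0, τ_c), and (τ_c + τ_s, ∞); consequently g has exactly three real roots z₅ < z₄ < z₃ satisfying −τ_c − τ_s < z₅ < 0 < z₄ < τ_c < τ_c + τ_s < z₃. -/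
/-!
Since `g z = z * ((z - τc) ^ 2 - τs ^ 2) - 2 * t ^ 2 * (z - τc)`, the signs of `g` at `0`, `τc` and
`τc + τs` are visible. A monic real cubic that is positive at `a` and negative at some `b > a` has
three roots interlacing with `a` and `b`; taking `a = 0`, `b = τc + τs` factors `g`, and the sign of
`g` at any further point then locates that point among the roots. At `τc` this gives `z₄ < τc`, and
at `-τc - τs` it gives a sharp criterion for the lower bound on `z₅`.
-/

open Polynomial

section Polynomial

variable {p : ℝ[X]} {a b : ℝ}

theorem exists_isRoot_gt_of_eval_neg (hlead : 0 ≤ p.leadingCoeff) (hb : p.eval b < 0) :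
    ∃ z, b < z ∧ p.IsRoot z := by
  have hdeg : 0 < p.degree := by
    by_contra! hconst
    rw [eq_C_of_degree_le_zero hconst, leadingCoeff_C] at hlead
    rw [eq_C_of_degree_le_zero hconst, eval_C] at hb
    exact hb.not_ge hlead
  obtain ⟨c, hbc, hc⟩ := ((Filter.eventually_gt_atTop b).and
    ((p.tendsto_atTop_of_leadingCoeff_nonneg hdeg hlead).eventually_gt_atTop 0)).exists
  obtain ⟨z, hz, hroot⟩ := intermediate_value_Ioo hbc.le p.continuousOn ⟨hb, hc⟩
  exact ⟨z, hz.1, hroot⟩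

theorem exists_isRoot_lt_of_eval_pos_of_odd_natDegree (hodd : Odd p.natDegree)
    (hlead : 0 ≤ p.leadingCoeff) (ha : 0 < p.eval a) : ∃ z, z < a ∧ p.IsRoot z := by
  have hlead_reflected : 0 ≤ (-p.comp (-X)).leadingCoeff := by
    simpa [hodd.neg_one_pow] using hlead
  obtain ⟨z, hz, hroot⟩ :=
    exists_isRoot_gt_of_eval_neg (b := -a) hlead_reflected (by simpa using ha)
  exact ⟨-z, neg_lt.1 hz, by simpa using hroot⟩

theorem eq_prod_X_sub_C_of_monic_of_natDegree_eq_card {R : Type*} [CommRing R] [IsDomain R]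
    {q : R[X]} (hq : q.Monic) {s : Finset R} (hdeg : q.natDegree = s.card)
    (hs : ∀ x ∈ s, q.IsRoot x) : q = ∏ x ∈ s, (X - C x) := by
  have hroots : q.roots = s.val :=
    roots_eq_of_natDegree_le_card_of_ne_zero hs hdeg.le hq.ne_zero
  have hcard : q.roots.card = q.natDegree := by rw [hroots, hdeg, Finset.card_val]
  rw [← prod_multiset_X_sub_C_of_monic_of_roots_card_eq hq hcard, hroots, Finset.prod]

theorem exists_interlacing_roots_of_monic_cubic (hp : p.Monic) (hdeg : p.natDegree = 3)
    (hab : a < b) (ha : 0 < p.eval a) (hb : p.eval b < 0) :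
    ∃ x y z, x < a ∧ a < y ∧ y < b ∧ b < z ∧ p = (X - C x) * (X - C y) * (X - C z) := by
  have hlead : 0 ≤ p.leadingCoeff := by simp [hp.leadingCoeff]
  obtain ⟨x, hxa, hx⟩ :=
    exists_isRoot_lt_of_eval_pos_of_odd_natDegree (hdeg ▸ by decide) hlead ha
  obtain ⟨y, ⟨hay, hyb⟩, hy⟩ := intermediate_value_Ioo' hab.le p.continuousOn ⟨hb, ha⟩
  obtain ⟨z, hbz, hz⟩ := exists_isRoot_gt_of_eval_neg hlead hb
  have hxy : x ≠ y := (hxa.trans hay).ne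
  have hyz : y ≠ z := (hyb.trans hbz).ne
  have hxz : x ≠ z := (hxa.trans (hab.trans hbz)).ne
  refine ⟨x, y, z, hxa, hay, hyb, hbz, ?_⟩
  rw [eq_prod_X_sub_C_of_monic_of_natDegree_eq_card hp (s := {x, y, z})
    (by simp [hdeg, hxy, hyz, hxz]) (by simpa using ⟨hx, hy, hz⟩)]
  simp [hxy, hyz, hxz, mul_assoc]

end Polynomial

/-- The cubic `g` of the theorem, encoded by its coefficients so that polynomial root counting
applies to `(gCubic τc τs t).toPoly`. -/
def gCubic {R : Type*} [CommRing R] (τc τs t : R) : Cubic R :=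
  ⟨1, -2 * τc, τc ^ 2 - τs ^ 2 - 2 * t ^ 2, 2 * τc * t ^ 2⟩

namespace gCubic

section CommRing

variable {R : Type*} [CommRing R] (τc τs t : R)

theorem monic_toPoly : (gCubic τc τs t).toPoly.Monic :=
  Cubic.monic_of_a_eq_one rfl

theorem natDegree_toPoly [Nontrivial R] : (gCubic τc τs t).toPoly.natDegree = 3 :=
  Cubic.natDegree_of_a_ne_zero one_ne_zero

theorem eval_toPoly (z : R) :
    (gCubic τc τs t).toPoly.eval z = z * ((z - τc) ^ 2 - τs ^ 2) - 2 * t ^ 2 * (z - τc) := by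
  simp only [gCubic, Cubic.toPoly, eval_add, eval_mul, eval_C, eval_pow, eval_X]
  ring

end CommRing

section Sign

variable {R : Type*} [CommRing R] [LinearOrder R] [IsStrictOrderedRing R] {τc τs t : R}

theorem eval_zero_pos (hτc : 0 < τc) (ht : t ≠ 0) : 0 < (gCubic τc τs t).toPoly.eval 0 := by
  have heval : (gCubic τc τs t).toPoly.eval 0 = 2 * t ^ 2 * τc := by rw [eval_toPoly]; ring
  rw [heval]
  positivity

theorem eval_τc_neg (hτc : 0 < τc) (hτs : τs ≠ 0) : (gCubic τc τs t).toPoly.eval τc < 0 := by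
  have heval : (gCubic τc τs t).toPoly.eval τc = -(τc * τs ^ 2) := by rw [eval_toPoly]; ring
  rw [heval, neg_lt_zero]
  positivity

theorem eval_add_neg (hτs : 0 < τs) (ht : t ≠ 0) :
    (gCubic τc τs t).toPoly.eval (τc + τs) < 0 := by
  have heval : (gCubic τc τs t).toPoly.eval (τc + τs) = -(2 * t ^ 2 * τs) := by
    rw [eval_toPoly]; ring
  rw [heval, neg_lt_zero]
  positivity

theorem eval_neg_sub_neg_iff :
    (gCubic τc τs t).toPoly.eval (-τc - τs) < 0 ↔
      t ^ 2 * (2 * τc + τs) < 2 * τc * (τc + τs) ^ 2 := by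
  have heval : (gCubic τc τs t).toPoly.eval (-τc - τs) =
      2 * (t ^ 2 * (2 * τc + τs) - 2 * τc * (τc + τs) ^ 2) := by
    rw [eval_toPoly]; ring
  rw [heval]
  constructor <;> intro h <;> linarith

theorem sq_mul_lt_of_le (hτc : 0 < τc) (hτs : 0 < τs) (ht : 0 ≤ t) (htc : t ≤ τc) :
    t ^ 2 * (2 * τc + τs) < 2 * τc * (τc + τs) ^ 2 := by
  have hgap : 0 < τc * τs * (3 * τc + 2 * τs) := by positivity
  calc t ^ 2 * (2 * τc + τs) ≤ τc ^ 2 * (2 * τc + τs) := by gcongr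
    _ < τc ^ 2 * (2 * τc + τs) + τc * τs * (3 * τc + 2 * τs) := lt_add_of_pos_right _ hgap
    _ = 2 * τc * (τc + τs) ^ 2 := by ring

end Sign

theorem exists_factorization {τc τs t : ℝ} (hτc : 0 < τc) (hτs : 0 < τs) (ht : t ≠ 0) :
    ∃ z₅ z₄ z₃, z₅ < 0 ∧ 0 < z₄ ∧ z₄ < τc ∧ τc + τs < z₃ ∧
      ∀ z, (gCubic τc τs t).toPoly.eval z = (z - z₅) * (z - z₄) * (z - z₃) := by
  obtain ⟨z₅, z₄, z₃, hz₅, hz₄, -, hz₃, hfactor⟩ :=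
    exists_interlacing_roots_of_monic_cubic (monic_toPoly τc τs t) (natDegree_toPoly τc τs t)
      (add_pos hτc hτs) (eval_zero_pos hτc ht) (eval_add_neg hτs ht)
  have heval (z : ℝ) : (gCubic τc τs t).toPoly.eval z = (z - z₅) * (z - z₄) * (z - z₃) := by
    simp [hfactor]
  have hτc_sign : (τc - z₅) * (τc - z₄) * (τc - z₃) < 0 :=
    heval τc ▸ eval_τc_neg hτc hτs.ne'
  have hprod : 0 < (τc - z₅) * (τc - z₄) := pos_of_mul_neg_left hτc_sign (by linarith)
  have hz₅c : 0 < τc - z₅ := by linarith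
  exact ⟨z₅, z₄, z₃, hz₅, hz₄, sub_pos.1 ((mul_pos_iff_of_pos_left hz₅c).1 hprod), hz₃, heval⟩

end gCubic

theorem cubic_three_roots_general
    (τc τs t : ℝ) (hτc : 0 < τc) (hτs : 0 < τs) (ht : t ≠ 0)
    (g : ℝ → ℝ)
    (hg : ∀ z, g z = z ^ 3 - 2 * τc * z ^ 2 + (τc ^ 2 - τs ^ 2 - 2 * t ^ 2) * z
        + 2 * τc * t ^ 2) :
    ∃ z₅ z₄ z₃ : ℝ,
      g z₅ = 0 ∧ g z₄ = 0 ∧ g z₃ = 0 ∧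
      (-τc - τs < z₅ ↔ t ^ 2 * (2 * τc + τs) < 2 * τc * (τc + τs) ^ 2) ∧
      z₅ < 0 ∧ 0 < z₄ ∧ z₄ < τc ∧ τc + τs < z₃ ∧
      (∀ z, g z = 0 → z = z₅ ∨ z = z₄ ∨ z = z₃) := by
  obtain ⟨z₅, z₄, z₃, hz₅, hz₄, hz₄c, hz₃, hfactor⟩ := gCubic.exists_factorization hτc hτs ht
  have hg_eval (z : ℝ) : g z = (gCubic τc τs t).toPoly.eval z := by
    rw [hg, gCubic.eval_toPoly]; ring
  have hg_root (z : ℝ) : g z = 0 ↔ z = z₅ ∨ z = z₄ ∨ z = z₃ := by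
    simp only [hg_eval, hfactor, mul_eq_zero, sub_eq_zero, or_assoc]
  have hlower : -τc - τs < z₅ ↔ t ^ 2 * (2 * τc + τs) < 2 * τc * (τc + τs) ^ 2 := by
    have hpos : 0 < (-τc - τs - z₄) * (-τc - τs - z₃) :=
      mul_pos_of_neg_of_neg (by linarith) (by linarith)
    rw [← gCubic.eval_neg_sub_neg_iff, hfactor, mul_assoc, mul_neg_iff]
    simp only [hpos, hpos.not_gt, and_false, and_true, false_or, sub_neg]
  exact ⟨z₅, z₄, z₃, by simp [hg_root], by simp [hg_root], by simp [hg_root], hlower,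
    hz₅, hz₄, hz₄c, hz₃, fun z ↦ (hg_root z).1⟩

/-- The cubic `g(z) = z³ − 2τ_c z² + (τ_c² − τ_s² − 2t²)z + 2τ_c t²` has exactly three
real roots `z₅ < z₄ < z₃` with `−τ_c − τ_s < z₅ < 0 < z₄ < τ_c < τ_c + τ_s < z₃`,
provided `τ_c, τ_s > 0` and `0 < t ≤ τ_c`. -/
theorem cubic_three_roots
    (τc τs t : ℝ) (hτc : 0 < τc) (hτs : 0 < τs) (ht : 0 < t) (htc : t ≤ τc)
    (g : ℝ → ℝ)
    (hg : ∀ z, g z = z ^ 3 - 2 * τc * z ^ 2 + (τc ^ 2 - τs ^ 2 - 2 * t ^ 2) * z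
        + 2 * τc * t ^ 2) :
    ∃ z₅ z₄ z₃ : ℝ,
      g z₅ = 0 ∧ g z₄ = 0 ∧ g z₃ = 0 ∧
      -τc - τs < z₅ ∧ z₅ < 0 ∧ 0 < z₄ ∧ z₄ < τc ∧ τc + τs < z₃ ∧
      (∀ z, g z = 0 → z = z₅ ∨ z = z₄ ∨ z = z₃) := by
  obtain ⟨z₅, z₄, z₃, h₅, h₄, h₃, hlower, hrest⟩ :=
    cubic_three_roots_general τc τs t hτc hτs ht.ne' g hg
  exact ⟨z₅, z₄, z₃, h₅, h₄, h₃, hlower.2 (gCubic.sq_mul_lt_of_le hτc hτs ht.le htc), hrest⟩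
end

section
/- Assume t ≠ 0, and let λ ∈ ℝ with λ ≠ 1 + τ_c and λ ≠ 1 be such that z = λ − 1 satisfies g(z) = 0. Set a = (λ − 1)/(2t) and b = τ_s·(λ − 1)/(2·(λ − 1 − τ_c)·t). Then the vector v = (1, a, a, b, b)ᵀ ∈ ℝ⁵ is an eigenvector of T(t) with eigenvalue λ, i.e., T(t)·v = λ·v. -/
open Matrix

/-!
The matrix is invariant under the reflection exchanging the coordinates `1 ↔ 2` and `3 ↔ 4`, so on a
vector `(x, a, a, b, b)` the eigenvalue equation collapses to three scalar equations. With
`z = lam - 1`, the first and the last are solved by the given `a` and `b`; substituting these into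
the middle one leaves `g z = z * ((z - τc) ^ 2 - τs ^ 2) - 2 * t ^ 2 * (z - τc) = 0`, up to the
nonzero factor `2 * t * (z - τc)`.
-/

/-- The matrix `T(t)`: the identity plus the weighted adjacency matrix of the house graph. The apex
`0` is joined with weight `t` to the vertices `1`, `2` of the square `1, 2, 4, 3`, whose horizontal
edges `12`, `34` have weight `τc` and whose vertical edges `13`, `24` have weight `τs`. -/
def houseMatrix {R : Type*} [Zero R] [One R] (τc τs t : R) : Matrix (Fin 5) (Fin 5) R :=
  !![1, t, t, 0, 0;
     t, 1, τc, τs, 0;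
     t, τc, 1, 0, τs;
     0, τs, 0, 1, τc;
     0, 0, τs, τc, 1]

theorem houseMatrix_mulVec_symmetric {R : Type*} [CommSemiring R] (τc τs t x a b : R) :
    houseMatrix τc τs t *ᵥ ![x, a, a, b, b] =
      ![x + 2 * t * a,
        t * x + (1 + τc) * a + τs * b, t * x + (1 + τc) * a + τs * b,
        τs * a + (1 + τc) * b, τs * a + (1 + τc) * b] := by
  ext i
  fin_cases i <;> simp [houseMatrix, mulVec, dotProduct, Fin.sum_univ_succ] <;> ring

section CommRing

variable {R : Type*} [CommRing R]

theorem houseMatrix_mulVec_symmetric_eq_smul {τc τs t lam x a b : R}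
    (apex : 2 * t * a = (lam - 1) * x)
    (upper : t * x + τs * b = (lam - 1 - τc) * a)
    (lower : τs * a = (lam - 1 - τc) * b) :
    houseMatrix τc τs t *ᵥ ![x, a, a, b, b] = lam • ![x, a, a, b, b] := by
  have apex_entry : x + 2 * t * a = lam * x := by linear_combination apex
  have upper_entry : t * x + (1 + τc) * a + τs * b = lam * a := by linear_combination upper
  have lower_entry : τs * a + (1 + τc) * b = lam * b := by linear_combination lower
  rw [houseMatrix_mulVec_symmetric, apex_entry, upper_entry, lower_entry]
  simp only [smul_cons, smul_eq_mul, smul_empty]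

theorem upper_equation_of_cubic_root [NoZeroDivisors R] {τc τs t z x a b : R}
    (h2t : 2 * t ≠ 0) (hz : z - τc ≠ 0)
    (hroot : z ^ 3 - 2 * τc * z ^ 2 + (τc ^ 2 - τs ^ 2 - 2 * t ^ 2) * z + 2 * τc * t ^ 2 = 0)
    (apex : 2 * t * a = z * x) (lower : τs * a = (z - τc) * b) :
    t * x + τs * b = (z - τc) * a := by
  have scaled : 2 * t * (z - τc) * (t * x + τs * b - (z - τc) * a) = 0 := by
    linear_combination (τs ^ 2 - (z - τc) ^ 2) * apex - 2 * t * τs * lower - x * hroot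
  exact sub_eq_zero.mp ((mul_eq_zero.mp scaled).resolve_left (mul_ne_zero h2t hz))

end CommRing

theorem eigenvector_of_cubic_root_general {K : Type*} [Field K] [NeZero (2 : K)]
    {τc τs t lam : K} (ht : t ≠ 0) (hlam : lam ≠ 1 + τc)
    (hroot : (lam - 1) ^ 3 - 2 * τc * (lam - 1) ^ 2
        + (τc ^ 2 - τs ^ 2 - 2 * t ^ 2) * (lam - 1) + 2 * τc * t ^ 2 = 0)
    {a b : K} (ha : a = (lam - 1) / (2 * t))
    (hb : b = τs * (lam - 1) / (2 * (lam - 1 - τc) * t)) :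
    houseMatrix τc τs t *ᵥ ![1, a, a, b, b] = lam • ![1, a, a, b, b] := by
  have h2t : 2 * t ≠ 0 := mul_ne_zero two_ne_zero ht
  have hz : lam - 1 - τc ≠ 0 := by rwa [sub_sub, sub_ne_zero]
  have apex : 2 * t * a = (lam - 1) * 1 := by rw [ha, mul_div_cancel₀ _ h2t, mul_one]
  have lower : τs * a = (lam - 1 - τc) * b := by rw [ha, hb]; field_simp
  exact houseMatrix_mulVec_symmetric_eq_smul apex
    (upper_equation_of_cubic_root h2t hz hroot apex lower) lower

/-- If `z = λ − 1` is a root of `g` with `λ ≠ 1 + τ_c`, `λ ≠ 1` and `t ≠ 0`, then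
`v = (1, a, a, b, b)ᵀ` with `a = (λ−1)/(2t)`, `b = τ_s(λ−1)/(2(λ−1−τ_c)t)` is an
eigenvector of `T(t)` with eigenvalue `λ`. -/
theorem eigenvector_of_cubic_root
    (τc τs t : ℝ) (ht : t ≠ 0) (lam : ℝ)
    (hlam1 : lam ≠ 1 + τc) (hlam2 : lam ≠ 1)
    (hroot : (lam - 1) ^ 3 - 2 * τc * (lam - 1) ^ 2
        + (τc ^ 2 - τs ^ 2 - 2 * t ^ 2) * (lam - 1) + 2 * τc * t ^ 2 = 0)
    (a b : ℝ) (ha : a = (lam - 1) / (2 * t))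
    (hb : b = τs * (lam - 1) / (2 * (lam - 1 - τc) * t))
    (T : Matrix (Fin 5) (Fin 5) ℝ)
    (hT : T = !![1, t, t, 0, 0;
                 t, 1, τc, τs, 0;
                 t, τc, 1, 0, τs;
                 0, τs, 0, 1, τc;
                 0, 0, τs, τc, 1]) :
    T *ᵥ ![1, a, a, b, b] = lam • ![1, a, a, b, b] := by
  subst hT
  exact eigenvector_of_cubic_root_general ht hlam1 hroot ha hb
end

section
/- Let a, b ∈ ℝ with (a, b) ≠ (0, 0), let U ∈ ℝ^{4×2} be the matrix whose two columns are (a, a, b, b)ᵀ and (−1, 1, −1, 1)ᵀ, and let y = (1, 1, 0, 0)ᵀ. Then R(U, y) = 2b² / (a² + b²). -/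
open Matrix

/-! A solution `μ₀` of the normal equations `Uᵀ (y - U μ₀) = 0` minimizes the squared residual, by
Pythagoras. Here `μ₀ = (a / (a² + b²), 0)ᵀ` is such a solution: it leaves the residual vector
`b / (a² + b²) • (b, b, -a, -a)ᵀ`, which is orthogonal to both columns of `U`. -/

section NormalEquations

variable {m n R : Type*} [Fintype m] [Fintype n]

theorem sum_sub_mulVec_sq_eq_add_of_normal_equations [CommRing R] {U : Matrix m n R} {y : m → R}
    {μ₀ : n → R} (h : Uᵀ *ᵥ (y - U *ᵥ μ₀) = 0) (μ : n → R) :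
    ∑ i, (y i - (U *ᵥ μ) i) ^ 2 =
      ∑ i, (y i - (U *ᵥ μ₀) i) ^ 2 + ∑ i, (U *ᵥ (μ - μ₀)) i ^ 2 := by
  have orthogonal : ∑ i, (y i - (U *ᵥ μ₀) i) * (U *ᵥ (μ - μ₀)) i = 0 :=
    calc (y - U *ᵥ μ₀) ⬝ᵥ U *ᵥ (μ - μ₀)
        = Uᵀ *ᵥ (y - U *ᵥ μ₀) ⬝ᵥ (μ - μ₀) := by rw [dotProduct_mulVec, mulVec_transpose]
      _ = 0 := by rw [h, zero_dotProduct]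
  calc ∑ i, (y i - (U *ᵥ μ) i) ^ 2
      = ∑ i, ((y i - (U *ᵥ μ₀) i) ^ 2 + (U *ᵥ (μ - μ₀)) i ^ 2
          - 2 * ((y i - (U *ᵥ μ₀) i) * (U *ᵥ (μ - μ₀)) i)) := by
        refine Finset.sum_congr rfl fun i _ => ?_
        rw [mulVec_sub, Pi.sub_apply]
        ring
    _ = ∑ i, (y i - (U *ᵥ μ₀) i) ^ 2 + ∑ i, (U *ᵥ (μ - μ₀)) i ^ 2 := by
        rw [Finset.sum_sub_distrib, Finset.sum_add_distrib, ← Finset.mul_sum, orthogonal,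
          mul_zero, sub_zero]

theorem isLeast_sum_sub_mulVec_sq_of_normal_equations [CommRing R] [LinearOrder R]
    [IsStrictOrderedRing R] {U : Matrix m n R} {y : m → R} {μ₀ : n → R}
    (h : Uᵀ *ᵥ (y - U *ᵥ μ₀) = 0) :
    IsLeast {r : R | ∃ μ : n → R, r = ∑ i, (y i - (U *ᵥ μ) i) ^ 2}
      (∑ i, (y i - (U *ᵥ μ₀) i) ^ 2) := by
  refine ⟨⟨μ₀, rfl⟩, ?_⟩
  rintro _ ⟨μ, rfl⟩
  rw [sum_sub_mulVec_sq_eq_add_of_normal_equations h μ]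
  exact le_add_of_nonneg_right (Finset.sum_nonneg fun i _ => sq_nonneg _)

end NormalEquations

theorem toy_transpose_mulVec_eq_zero {R : Type*} [CommRing R] (a b : R) :
    !![a, -1; a, 1; b, -1; b, 1]ᵀ *ᵥ ![b, b, -a, -a] = 0 := by
  ext j
  fin_cases j <;> simp [mulVec, dotProduct, Fin.sum_univ_four, mul_comm b a]

theorem toy_sub_mulVec_eq_smul {K : Type*} [Field K] {a b : K} (hs : a ^ 2 + b ^ 2 ≠ 0) :
    ![1, 1, 0, 0] - !![a, -1; a, 1; b, -1; b, 1] *ᵥ ![a / (a ^ 2 + b ^ 2), 0] =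
      (b / (a ^ 2 + b ^ 2)) • ![b, b, -a, -a] := by
  ext i
  fin_cases i <;> simp <;> field_simp <;> ring

theorem residual_toy_general_general {K : Type*} [Field K] [LinearOrder K] [IsStrictOrderedRing K]
    (a b : K) (hab : ¬(a = 0 ∧ b = 0)) :
    IsLeast {r : K | ∃ μ : Fin 2 → K,
        r = ∑ i, ((![1, 1, 0, 0] : Fin 4 → K) i - (!![a, -1; a, 1; b, -1; b, 1] *ᵥ μ) i) ^ 2}
      (2 * b ^ 2 / (a ^ 2 + b ^ 2)) := by
  have hs : a ^ 2 + b ^ 2 ≠ 0 := by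
    rwa [Ne, add_eq_zero_iff_of_nonneg (sq_nonneg a) (sq_nonneg b), sq_eq_zero_iff,
      sq_eq_zero_iff]
  set U := !![a, -1; a, 1; b, -1; b, 1]
  set μ₀ := ![a / (a ^ 2 + b ^ 2), 0]
  have residual : ![1, 1, 0, 0] - U *ᵥ μ₀ = (b / (a ^ 2 + b ^ 2)) • ![b, b, -a, -a] :=
    toy_sub_mulVec_eq_smul hs
  have normal_equations : Uᵀ *ᵥ (![1, 1, 0, 0] - U *ᵥ μ₀) = 0 := by
    rw [residual, mulVec_smul, toy_transpose_mulVec_eq_zero, smul_zero]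
  have minimum : ∑ i, ((![1, 1, 0, 0] : Fin 4 → K) i - (U *ᵥ μ₀) i) ^ 2 =
      2 * b ^ 2 / (a ^ 2 + b ^ 2) :=
    calc ∑ i, ((![1, 1, 0, 0] : Fin 4 → K) i - (U *ᵥ μ₀) i) ^ 2
        = ∑ i, (b / (a ^ 2 + b ^ 2) * ![b, b, -a, -a] i) ^ 2 :=
          Finset.sum_congr rfl fun i _ => congrArg (· ^ 2) (congrFun residual i)
      _ = (b / (a ^ 2 + b ^ 2)) ^ 2 * (2 * (a ^ 2 + b ^ 2)) := by
          simp only [Fin.sum_univ_four, cons_val]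
          ring
      _ = 2 * b ^ 2 / (a ^ 2 + b ^ 2) := by field_simp
  exact minimum ▸ isLeast_sum_sub_mulVec_sq_of_normal_equations normal_equations

/-- For `U` with columns `(a,a,b,b)ᵀ` and `(−1,1,−1,1)ᵀ`, `(a,b) ≠ (0,0)`, and
`y = (1,1,0,0)ᵀ`, the regression residual is `R(U,y) = 2b²/(a²+b²)`. -/
theorem residual_toy_general
    (a b : ℝ) (hab : ¬(a = 0 ∧ b = 0))
    (U : Matrix (Fin 4) (Fin 2) ℝ)
    (hU : U = !![a, -1; a, 1; b, -1; b, 1])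
    (y : Fin 4 → ℝ) (hy : y = ![1, 1, 0, 0]) :
    sInf {r : ℝ | ∃ μ : Fin 2 → ℝ, r = ∑ i, (y i - (U *ᵥ μ) i) ^ 2}
      = 2 * b ^ 2 / (a ^ 2 + b ^ 2) := by
  subst hU hy
  exact (residual_toy_general_general a b hab).csInf_eq
end

section
/- Let a₁, b₁, a₂, b₂ ∈ ℝ with a₁·b₂ ≠ a₂·b₁, let U ∈ ℝ^{4×2} be the matrix whose two columns are (a₁, b₁, a₁, b₁)ᵀ and (a₂, b₂, a₂, b₂)ᵀ, and let y = (1, 1, 0, 0)ᵀ. Then R(U, y) = 1. -/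
open Matrix

/-!
If the rows of `U` are two copies of those of `A`, then a fit `U μ` of `(w, z)` uses the same vector
`v = A μ` for both halves, and the parallelogram identity
`‖w - v‖² + ‖z - v‖² = ‖w - z‖² / 2 + 2 ‖(w + z) / 2 - v‖²` says that the best `v` is the best fit
of the midpoint `(w + z) / 2`. When the midpoint lies in the column space of `A`, as it does for
invertible `A`, it is fitted exactly and the residual is `‖w - z‖² / 2`, which is `1` for
`w = (1, 1)` and `z = 0`.
-/

section RegressionResidual

variable {m n ι : Type*} [Fintype m] [Fintype n] [Fintype ι]

/-- The regression residual `R(U, y)`: the least squared Euclidean distance from `y` to the column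
space of `U`. It is written with coordinates because `m → ℝ` carries the sup norm. -/
noncomputable def regressionResidual (U : Matrix m n ℝ) (y : m → ℝ) : ℝ :=
  ⨅ μ : n → ℝ, ∑ i, (y i - (U *ᵥ μ) i) ^ 2

theorem regressionResidual_eq_sInf (U : Matrix m n ℝ) (y : m → ℝ) :
    regressionResidual U y = sInf {r : ℝ | ∃ μ : n → ℝ, r = ∑ i, (y i - (U *ᵥ μ) i) ^ 2} := by
  simp only [regressionResidual, iInf, Set.range, eq_comm]

theorem bddBelow_range_sum_sq_sub_mulVec (U : Matrix m n ℝ) (y : m → ℝ) :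
    BddBelow (Set.range fun μ : n → ℝ => ∑ i, (y i - (U *ᵥ μ) i) ^ 2) :=
  ⟨0, Set.forall_mem_range.mpr fun _ => Finset.sum_nonneg fun _ _ => sq_nonneg _⟩

theorem regressionResidual_eq_zero_of_mem_range {U : Matrix m n ℝ} {y : m → ℝ}
    (hy : y ∈ Set.range U.mulVec) : regressionResidual U y = 0 := by
  obtain ⟨ν, rfl⟩ := hy
  apply le_antisymm
  · exact (ciInf_le (bddBelow_range_sum_sq_sub_mulVec U _) ν).trans_eq (by simp)
  · exact Real.iInf_nonneg fun _ => Finset.sum_nonneg fun _ _ => sq_nonneg _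

theorem regressionResidual_submatrix_equiv (e : m ≃ ι) (U : Matrix ι n ℝ) (y : ι → ℝ) :
    regressionResidual (U.submatrix e id) (y ∘ e) = regressionResidual U y :=
  iInf_congr fun μ => e.sum_comp fun i => (y i - (U *ᵥ μ) i) ^ 2

theorem sum_sq_sub_add_sum_sq_sub (w z v : m → ℝ) :
    ∑ i, (w i - v i) ^ 2 + ∑ i, (z i - v i) ^ 2 =
      (∑ i, (w i - z i) ^ 2) / 2 + 2 * ∑ i, (((2 : ℝ)⁻¹ • (w + z)) i - v i) ^ 2 := by
  rw [Finset.sum_div, Finset.mul_sum, ← Finset.sum_add_distrib, ← Finset.sum_add_distrib]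
  refine Finset.sum_congr rfl fun i _ => ?_
  simp only [Pi.smul_apply, Pi.add_apply, smul_eq_mul]
  ring

theorem regressionResidual_fromRows_self (A : Matrix m n ℝ) (w z : m → ℝ) :
    regressionResidual (fromRows A A) (Sum.elim w z) =
      (∑ i, (w i - z i) ^ 2) / 2 + 2 * regressionResidual A ((2 : ℝ)⁻¹ • (w + z)) := by
  have hbdd := bddBelow_range_sum_sq_sub_mulVec A ((2 : ℝ)⁻¹ • (w + z))
  simp only [regressionResidual, fromRows_mulVec, Fintype.sum_sum_type, Sum.elim_inl, Sum.elim_inr,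
    sum_sq_sub_add_sum_sq_sub]
  rw [Real.mul_iInf_of_nonneg zero_le_two, add_ciInf]
  simpa only [Set.range_comp'] using
    (monotone_mul_left_of_nonneg (zero_le_two (α := ℝ))).map_bddBelow hbdd

theorem residual_one_of_interleaved_columns_general (e : m ⊕ m ≃ ι) {A : Matrix m n ℝ}
    {w z : m → ℝ} {U : Matrix ι n ℝ} {y : ι → ℝ} (hU : U.submatrix e id = fromRows A A)
    (hy : y ∘ e = Sum.elim w z) (hwz : w + z ∈ Set.range A.mulVec) :
    sInf {r : ℝ | ∃ μ : n → ℝ, r = ∑ i, (y i - (U *ᵥ μ) i) ^ 2} =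
      (∑ i, (w i - z i) ^ 2) / 2 := by
  have midpoint_mem : (2 : ℝ)⁻¹ • (w + z) ∈ Set.range A.mulVec := by
    obtain ⟨ν, hν⟩ := hwz
    exact ⟨(2 : ℝ)⁻¹ • ν, by rw [mulVec_smul, hν]⟩
  rw [← regressionResidual_eq_sInf, ← regressionResidual_submatrix_equiv e, hU, hy,
    regressionResidual_fromRows_self, regressionResidual_eq_zero_of_mem_range midpoint_mem,
    mul_zero, add_zero]

end RegressionResidual

theorem mulVec_surjective_of_mul_ne_mul {K : Type*} [Field K] {a₁ b₁ a₂ b₂ : K}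
    (h : a₁ * b₂ ≠ a₂ * b₁) : Function.Surjective !![a₁, a₂; b₁, b₂].mulVec := by
  rw [mulVec_surjective_iff_isUnit, isUnit_iff_isUnit_det, det_fin_two_of, isUnit_iff_ne_zero]
  exact sub_ne_zero.mpr h

theorem submatrix_finSumFinEquiv_eq_fromRows_self {α : Type*} (a₁ b₁ a₂ b₂ : α) :
    !![a₁, a₂; b₁, b₂; a₁, a₂; b₁, b₂].submatrix (finSumFinEquiv (m := 2) (n := 2)) id =
      fromRows !![a₁, a₂; b₁, b₂] !![a₁, a₂; b₁, b₂] := by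
  ext i
  fin_cases i <;> rfl

theorem comp_finSumFinEquiv_eq_elim {α : Type*} (w₁ w₂ z₁ z₂ : α) :
    ![w₁, w₂, z₁, z₂] ∘ finSumFinEquiv (m := 2) (n := 2) = Sum.elim ![w₁, w₂] ![z₁, z₂] := by
  ext i
  fin_cases i <;> rfl

/-- For `U` with columns `(a₁,b₁,a₁,b₁)ᵀ` and `(a₂,b₂,a₂,b₂)ᵀ` with `a₁b₂ ≠ a₂b₁`,
and `y = (1,1,0,0)ᵀ`, the regression residual is `R(U,y) = 1`. -/
theorem residual_one_of_interleaved_columns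
    (a₁ b₁ a₂ b₂ : ℝ) (h : a₁ * b₂ ≠ a₂ * b₁)
    (U : Matrix (Fin 4) (Fin 2) ℝ)
    (hU : U = !![a₁, a₂; b₁, b₂; a₁, a₂; b₁, b₂])
    (y : Fin 4 → ℝ) (hy : y = ![1, 1, 0, 0]) :
    sInf {r : ℝ | ∃ μ : Fin 2 → ℝ, r = ∑ i, (y i - (U *ᵥ μ) i) ^ 2} = 1 := by
  subst hU hy
  rw [residual_one_of_interleaved_columns_general finSumFinEquiv
    (submatrix_finSumFinEquiv_eq_fromRows_self a₁ b₁ a₂ b₂) (comp_finSumFinEquiv_eq_elim 1 1 0 0)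
    (mulVec_surjective_of_mul_ne_mul h _)]
  norm_num [Fin.sum_univ_two]
end
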